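/- Consider the ODE h W' = blockdiag(A_{11}, A_{22}) W + h^p Θ W with p ≥ 1, where A_{11}, A_{22}, Θ are matrix-valued functions uniformly analytic in x in a complex neighborhood of a point x_* ∈ ℝ and continuous in h on (0,h₀], with A_{11}(x_*,h) and A_{22}(x_*,h) having no eigenvalues in common (uniformly in h). Then there exists a coordinate change W = T(x,h) Z with T = [[I, h^p α_{12}],[h^p α_{21}, I]] such that h Z' = blockdiag(A_{11} + h^p β_{11}, A_{22} + h^p β_{22}) Z, where α_{12}, α_{21}, β_{11}, β_{22} are uniformly analytic in x on a (possibly smaller) complex neighborhood of x_* and continuous in h on a neighborhood of h = 0, uniformly bounded as h → 0⁺. -/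

import Mathlib

open Set

attribute [local instance] Matrix.linftyOpNormedAddCommGroup Matrix.linftyOpNormedRing
  Matrix.linftyOpNormedAlgebra Matrix.linftyOpNormedSpace

/-!
Writing `κ` for `h^p`, the matrix `T = [[1, κ α₁₂], [κ α₂₁, 1]]` block-diagonalizes the system as
soon as `α₁₂` solves a Riccati equation `h α' = A₁₁ α - α A₂₂ + Θ₁₂ + O(κ)` and `α₂₁` solves the one
with the blocks exchanged; then `β₁₁ = Θ₁₁ + κ Θ₁₂ α₂₁`, `β₂₂ = Θ₂₂ + κ Θ₂₁ α₁₂`.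
Near `x_*` such an equation has the form `h y' = L₀ y + F + B y + Q y y`, where the Sylvester
operator `L₀ : Y ↦ A₁₁(x_*) Y - Y A₂₂(x_*)` is invertible uniformly in `h` because its
eigenvalues are the differences of those of `A₁₁(x_*)` and `A₂₂(x_*)`, and where `B`, `Q` are small
for `x` near `x_*` and `h` small.

The equation is singular as `h → 0`, and only well-chosen initial values `y(x_*)` lead to solutions
bounded on a neighbourhood independent of `h`. In terms of Taylor coefficients it reads
`a k = L₀⁻¹ (h (k + 1) a (k + 1) - Rₖ(a))`. Replacing `h (k + 1)` by `min (h (k + 1)) ε` gives a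
contraction in a norm weighted by Catalan numbers, uniformly in `h`; its fixed point depends
continuously on `h` and solves the true equation for `k ≤ ε / h`. Its constant term is used as
initial value: past `k = ε / h` the recursion `a (k + 1) = (h (k + 1))⁻¹ (L₀ (a k) + Rₖ(a))` is no
longer singular and preserves geometric growth.
-/

section CatalanWeight

open Finset.HasAntidiagonal

lemma add_two_mul_catalan_succ (n : ℕ) :
    (n + 2) * catalan (n + 1) = (4 * n + 2) * catalan n := by
  refine Nat.eq_of_mul_eq_mul_left (Nat.add_pos_right n one_pos) ?_
  have hsucc := Nat.succ_mul_centralBinom_succ n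
  rw [← succ_mul_catalan_eq_centralBinom, ← succ_mul_catalan_eq_centralBinom] at hsucc
  linear_combination hsucc

lemma catalan_succ_le (n : ℕ) : catalan (n + 1) ≤ 4 * catalan n := by
  nlinarith [add_two_mul_catalan_succ n]

lemma catalan_le_succ : ∀ n : ℕ, catalan n ≤ catalan (n + 1)
  | 0 => by simp
  | n + 1 => by nlinarith [add_two_mul_catalan_succ (n + 1)]

lemma one_le_catalan (n : ℕ) : 1 ≤ catalan n :=
  catalan_zero.symm.le.trans (monotone_nat_of_le_succ catalan_le_succ n.zero_le)

lemma catalan_le_four_pow (n : ℕ) : catalan n ≤ 4 ^ n := by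
  induction n with
  | zero => simp
  | succ n ih => rw [pow_succ]; linarith [catalan_succ_le n]

/-- The weight `Cₖ τᵏ`, with `Cₖ` the Catalan numbers. Unlike the geometric weight `τᵏ`, it is
stable under convolution up to a constant. -/
noncomputable def catalanWeight (τ : ℝ) (k : ℕ) : ℝ := catalan k * τ ^ k

variable {τ τ' : ℝ}

lemma catalanWeight_nonneg (hτ : 0 ≤ τ) (k : ℕ) : 0 ≤ catalanWeight τ k := by
  unfold catalanWeight; positivity

lemma pow_le_catalanWeight (hτ : 0 ≤ τ) (k : ℕ) : τ ^ k ≤ catalanWeight τ k :=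
  le_mul_of_one_le_left (pow_nonneg hτ k) (mod_cast one_le_catalan k)

lemma catalanWeight_pos (hτ : 0 < τ) (k : ℕ) : 0 < catalanWeight τ k :=
  (pow_pos hτ k).trans_le (pow_le_catalanWeight hτ.le k)

lemma catalanWeight_le_pow (hτ : 0 ≤ τ) (k : ℕ) : catalanWeight τ k ≤ (4 * τ) ^ k := by
  have hcat : (catalan k : ℝ) ≤ 4 ^ k := mod_cast catalan_le_four_pow k
  rw [mul_pow, catalanWeight]
  gcongr

lemma catalanWeight_mono (hτ : 0 ≤ τ) (h : τ ≤ τ') (k : ℕ) :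
    catalanWeight τ k ≤ catalanWeight τ' k := by
  unfold catalanWeight; gcongr

lemma catalanWeight_succ_le (hτ : 0 ≤ τ) (k : ℕ) :
    catalanWeight τ (k + 1) ≤ 4 * τ * catalanWeight τ k := by
  have hcat : (catalan (k + 1) : ℝ) ≤ 4 * catalan k := mod_cast catalan_succ_le k
  calc catalan (k + 1) * τ ^ (k + 1) ≤ 4 * catalan k * τ ^ (k + 1) := by gcongr
    _ = 4 * τ * (catalan k * τ ^ k) := by ring

lemma mul_catalanWeight_le_succ (hτ : 0 ≤ τ) (k : ℕ) :
    τ * catalanWeight τ k ≤ catalanWeight τ (k + 1) := by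
  have hcat : (catalan k : ℝ) ≤ catalan (k + 1) := mod_cast catalan_le_succ k
  calc τ * (catalan k * τ ^ k) = catalan k * τ ^ (k + 1) := by ring
    _ ≤ catalan (k + 1) * τ ^ (k + 1) := by gcongr

lemma sum_antidiagonal_catalanWeight_mul (τ : ℝ) (k : ℕ) :
    ∑ p ∈ antidiagonal k, catalanWeight τ p.1 * catalanWeight τ p.2
      = catalan (k + 1) * τ ^ k := by
  rw [catalan_succ', Nat.cast_sum, Finset.sum_mul]
  refine Finset.sum_congr rfl fun p hp => ?_
  rw [← mem_antidiagonal.mp hp, catalanWeight, catalanWeight]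
  push_cast
  ring

lemma sum_antidiagonal_catalanWeight_mul_le (hτ : 0 ≤ τ) (k : ℕ) :
    ∑ p ∈ antidiagonal k, catalanWeight τ p.1 * catalanWeight τ p.2
      ≤ 4 * catalanWeight τ k := by
  have hcat : (catalan (k + 1) : ℝ) ≤ 4 * catalan k := mod_cast catalan_succ_le k
  rw [sum_antidiagonal_catalanWeight_mul, catalanWeight, ← mul_assoc]
  gcongr

/-- The sequence `a` is dominated by `M` times the Catalan weight of rate `τ`. -/
def CatalanBounded {E : Type*} [SeminormedAddCommGroup E] (τ M : ℝ) (a : ℕ → E) : Prop :=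
  ∀ k, ‖a k‖ ≤ M * catalanWeight τ k

variable {E : Type*} [SeminormedAddCommGroup E] {M M' : ℝ} {a : ℕ → E}

lemma CatalanBounded.nonneg (ha : CatalanBounded τ M a) : 0 ≤ M := by
  simpa [catalanWeight] using (norm_nonneg _).trans (ha 0)

lemma CatalanBounded.mono (ha : CatalanBounded τ M a) (hτ : 0 ≤ τ) (hττ' : τ ≤ τ')
    (hMM' : M ≤ M') : CatalanBounded τ' M' a := fun k =>
  calc ‖a k‖ ≤ M * catalanWeight τ k := ha k
    _ ≤ M' * catalanWeight τ' k :=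
      mul_le_mul hMM' (catalanWeight_mono hτ hττ' k) (catalanWeight_nonneg hτ k)
        (ha.nonneg.trans hMM')

end CatalanWeight

section RiccatiCoeff

open Finset.HasAntidiagonal

variable {E G : Type*} [NormedAddCommGroup E] [NormedSpace ℂ E]
  [NormedAddCommGroup G] [NormedSpace ℂ G]

/-- The Cauchy product of a sequence of operators with a sequence of vectors: the coefficients of
the power series `z ↦ B z (a z)`. -/
def cauchyApply (B : ℕ → E →L[ℂ] G) (a : ℕ → E) (k : ℕ) : G :=
  ∑ p ∈ antidiagonal k, B p.1 (a p.2)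

lemma cauchyApply_sub_right (B : ℕ → E →L[ℂ] G) (a b : ℕ → E) (k : ℕ) :
    cauchyApply B (a - b) k = cauchyApply B a k - cauchyApply B b k := by
  simp [cauchyApply]

lemma cauchyApply_sub_left (B B' : ℕ → E →L[ℂ] G) (a : ℕ → E) (k : ℕ) :
    cauchyApply (B - B') a k = cauchyApply B a k - cauchyApply B' a k := by
  simp [cauchyApply]

lemma cauchyApply_congr {B B' : ℕ → E →L[ℂ] G} {a b : ℕ → E} {k : ℕ}
    (hB : ∀ j ≤ k, B j = B' j) (hab : ∀ j ≤ k, a j = b j) :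
    cauchyApply B a k = cauchyApply B' b k :=
  Finset.sum_congr rfl fun _ hp => by
    rw [hB _ (antidiagonal.fst_le hp), hab _ (antidiagonal.snd_le hp)]

lemma continuous_cauchyApply {P : Type*} [TopologicalSpace P] {B : P → ℕ → E →L[ℂ] G}
    {a : P → ℕ → E} {k : ℕ} (hB : ∀ j ≤ k, Continuous fun h => B h j)
    (ha : ∀ j ≤ k, Continuous fun h => a h j) : Continuous fun h => cauchyApply (B h) (a h) k :=
  continuous_finsetSum _ fun p hp =>
    (hB p.1 (antidiagonal.fst_le hp)).clm_apply (ha p.2 (antidiagonal.snd_le hp))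

lemma norm_cauchyApply_le {τ M N : ℝ} {B : ℕ → E →L[ℂ] G} {a : ℕ → E} {k : ℕ} (hτ : 0 ≤ τ)
    (hM : 0 ≤ M) (hN : 0 ≤ N) (hB : ∀ j ≤ k, ‖B j‖ ≤ M * catalanWeight τ j)
    (ha : ∀ j ≤ k, ‖a j‖ ≤ N * catalanWeight τ j) :
    ‖cauchyApply B a k‖ ≤ 4 * M * N * catalanWeight τ k := by
  have hterm : ∀ p ∈ antidiagonal k,
      ‖B p.1 (a p.2)‖ ≤ M * N * (catalanWeight τ p.1 * catalanWeight τ p.2) := by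
    intro p hp
    calc ‖B p.1 (a p.2)‖ ≤ ‖B p.1‖ * ‖a p.2‖ := (B p.1).le_opNorm _
      _ ≤ M * catalanWeight τ p.1 * (N * catalanWeight τ p.2) := by
        have := catalanWeight_nonneg hτ p.1
        exact mul_le_mul (hB _ (antidiagonal.fst_le hp))
          (ha _ (antidiagonal.snd_le hp)) (norm_nonneg _) (by positivity)
      _ = M * N * (catalanWeight τ p.1 * catalanWeight τ p.2) := by ring
  calc ‖cauchyApply B a k‖ ≤ _ := norm_sum_le_of_le _ hterm
    _ ≤ M * N * (4 * catalanWeight τ k) := by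
      rw [← Finset.mul_sum]
      gcongr
      exact sum_antidiagonal_catalanWeight_mul_le hτ k
    _ = 4 * M * N * catalanWeight τ k := by ring

/-- The coefficients of the power series `z ↦ F z + B z (a z) + Q z (a z) (a z)`. -/
noncomputable def riccatiCoeff (F : ℕ → E) (B : ℕ → E →L[ℂ] E) (Q : ℕ → E →L[ℂ] E →L[ℂ] E)
    (a : ℕ → E) (k : ℕ) : E :=
  F k + cauchyApply B a k + cauchyApply (cauchyApply Q a) a k

variable {F : ℕ → E} {B : ℕ → E →L[ℂ] E} {Q : ℕ → E →L[ℂ] E →L[ℂ] E} {a b : ℕ → E} {k : ℕ}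
  {τ C η M D : ℝ}

lemma riccatiCoeff_congr (hab : ∀ j ≤ k, a j = b j) :
    riccatiCoeff F B Q a k = riccatiCoeff F B Q b k := by
  have hQ : ∀ j ≤ k, cauchyApply Q a j = cauchyApply Q b j := fun j hj =>
    cauchyApply_congr (fun _ _ => rfl) fun i hi => hab i (hi.trans hj)
  rw [riccatiCoeff, cauchyApply_congr (fun _ _ => rfl) hab, cauchyApply_congr hQ hab, riccatiCoeff]

lemma riccatiCoeff_sub_riccatiCoeff :
    riccatiCoeff F B Q a k - riccatiCoeff F B Q b k
      = cauchyApply B (a - b) k + cauchyApply (cauchyApply Q a) (a - b) k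
        + cauchyApply (cauchyApply Q (a - b)) b k := by
  have hQ : cauchyApply Q (a - b) = cauchyApply Q a - cauchyApply Q b :=
    funext (cauchyApply_sub_right Q a b)
  rw [hQ, cauchyApply_sub_left, cauchyApply_sub_right, cauchyApply_sub_right, riccatiCoeff,
    riccatiCoeff]
  abel

lemma continuous_riccatiCoeff {P : Type*} [TopologicalSpace P] {F : P → ℕ → E}
    {B : P → ℕ → E →L[ℂ] E} {Q : P → ℕ → E →L[ℂ] E →L[ℂ] E} {a : P → ℕ → E}
    (hF : ∀ j, Continuous fun h => F h j) (hB : ∀ j, Continuous fun h => B h j)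
    (hQ : ∀ j, Continuous fun h => Q h j) (ha : ∀ j ≤ k, Continuous fun h => a h j) :
    Continuous fun h => riccatiCoeff (F h) (B h) (Q h) (a h) k :=
  ((hF k).add (continuous_cauchyApply (fun j _ => hB j) ha)).add (continuous_cauchyApply
    (fun _ hj => continuous_cauchyApply (fun i _ => hQ i) fun i hi => ha i (hi.trans hj)) ha)

lemma norm_riccatiCoeff_le (hτ : 0 ≤ τ) (hM : 0 ≤ M) (hF : CatalanBounded τ C F)
    (hB : CatalanBounded τ η B) (hQ : CatalanBounded τ η Q)
    (ha : ∀ j ≤ k, ‖a j‖ ≤ M * catalanWeight τ j) :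
    ‖riccatiCoeff F B Q a k‖ ≤ (C + 4 * η * M + 16 * η * M ^ 2) * catalanWeight τ k := by
  have hη := hB.nonneg
  have hQa : ∀ j ≤ k, ‖cauchyApply Q a j‖ ≤ 4 * η * M * catalanWeight τ j := fun j hj =>
    norm_cauchyApply_le hτ hη hM (fun i _ => hQ i) fun i hi => ha i (hi.trans hj)
  have hlin := norm_cauchyApply_le hτ hη hM (fun i _ => hB i) ha
  have hquad := norm_cauchyApply_le hτ (by positivity) hM hQa ha
  calc ‖riccatiCoeff F B Q a k‖ ≤ _ := norm_add₃_le
    _ ≤ C * catalanWeight τ k + 4 * η * M * catalanWeight τ k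
        + 4 * (4 * η * M) * M * catalanWeight τ k := by gcongr; exact hF k
    _ = (C + 4 * η * M + 16 * η * M ^ 2) * catalanWeight τ k := by ring

lemma norm_riccatiCoeff_sub_le (hτ : 0 ≤ τ) (hB : CatalanBounded τ η B)
    (hQ : CatalanBounded τ η Q) (ha : CatalanBounded τ M a)
    (hb : CatalanBounded τ M b) (hab : CatalanBounded τ D (a - b)) :
    ‖riccatiCoeff F B Q a k - riccatiCoeff F B Q b k‖
      ≤ (4 * η + 32 * η * M) * D * catalanWeight τ k := by
  have hη := hB.nonneg
  have hM := ha.nonneg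
  have hD := hab.nonneg
  have hQa : CatalanBounded τ (4 * η * M) (cauchyApply Q a) := fun j =>
    norm_cauchyApply_le hτ hη hM (fun i _ => hQ i) fun i _ => ha i
  have hQab : CatalanBounded τ (4 * η * D) (cauchyApply Q (a - b)) := fun j =>
    norm_cauchyApply_le hτ hη hD (fun i _ => hQ i) fun i _ => hab i
  have hlin := norm_cauchyApply_le (k := k) hτ hη hD (fun i _ => hB i) fun i _ => hab i
  have hquad := norm_cauchyApply_le (k := k) hτ (by positivity) hD (fun i _ => hQa i)
    fun i _ => hab i
  have hquad' := norm_cauchyApply_le (k := k) hτ (by positivity) hM (fun i _ => hQab i)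
    fun i _ => hb i
  rw [riccatiCoeff_sub_riccatiCoeff]
  calc _ ≤ _ := norm_add₃_le
    _ ≤ _ := add_le_add_three hlin hquad hquad'
    _ = (4 * η + 32 * η * M) * D * catalanWeight τ k := by ring

end RiccatiCoeff

section WeightedFixedPoint

open BoundedContinuousFunction Metric

variable {P E : Type*} [TopologicalSpace P] [NormedAddCommGroup E] [NormedSpace ℝ E]
  {w : ℕ → ℝ} {M : ℝ}

lemma exists_boundedContinuousFunction_smul_eq (hw : ∀ k, 0 < w k) (hM : 0 ≤ M)
    {a : P → ℕ → E} (hcont : ∀ k, Continuous fun h => a h k)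
    (hbound : ∀ h k, ‖a h k‖ ≤ M * w k) :
    ∃ x : closedBall (0 : ℕ × P →ᵇ E) M, ∀ h k, w k • x.1 (k, h) = a h k := by
  have hcont' : Continuous fun q : ℕ × P => (w q.1)⁻¹ • a q.2 q.1 :=
    continuous_prod_of_discrete_left.2 fun k => (hcont k).const_smul (w k)⁻¹
  have hbound' : ∀ q : ℕ × P, ‖(w q.1)⁻¹ • a q.2 q.1‖ ≤ M := fun q => by
    rw [norm_smul, norm_inv, Real.norm_of_nonneg (hw _).le, inv_mul_le_iff₀ (hw _), mul_comm]
    exact hbound _ _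
  refine ⟨⟨ofNormedAddCommGroup _ hcont' M hbound', ?_⟩, fun h k => smul_inv_smul₀ (hw k).ne' _⟩
  exact mem_closedBall_zero_iff.2 (norm_ofNormedAddCommGroup_le _ hM hbound')

/-- The contraction principle is applied to all parameters at once, in the bounded continuous
functions on `ℕ × P`, so the fixed points depend continuously on the parameter. -/
lemma exists_continuous_fixedPoint_of_weighted_contraction [CompleteSpace E]
    (hw : ∀ k, 0 < w k) (hM : 0 ≤ M) (Φ : P → (ℕ → E) → ℕ → E)
    (hcont : ∀ a : P → ℕ → E, (∀ k, Continuous fun h => a h k) →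
      ∀ k, Continuous fun h => Φ h (a h) k)
    (hmaps : ∀ h a, (∀ k, ‖a k‖ ≤ M * w k) → ∀ k, ‖Φ h a k‖ ≤ M * w k)
    (hcontract : ∀ h a b D, 0 ≤ D → (∀ k, ‖a k‖ ≤ M * w k) → (∀ k, ‖b k‖ ≤ M * w k) →
      (∀ k, ‖a k - b k‖ ≤ D * w k) → ∀ k, ‖Φ h a k - Φ h b k‖ ≤ D / 2 * w k) :
    ∃ a : P → ℕ → E, (∀ k, Continuous fun h => a h k) ∧ (∀ h k, ‖a h k‖ ≤ M * w k) ∧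
      ∀ h, Φ h (a h) = a h := by
  let toSeq (x : closedBall (0 : ℕ × P →ᵇ E) M) (h : P) (k : ℕ) : E := w k • x.1 (k, h)
  have toSeq_cont (x k) : Continuous fun h => toSeq x h k := by fun_prop
  have toSeq_bound (x h k) : ‖toSeq x h k‖ ≤ M * w k := by
    rw [norm_smul, Real.norm_of_nonneg (hw k).le, mul_comm]
    have := (hw k).le
    gcongr
    exact (x.1.norm_coe_le_norm _).trans (mem_closedBall_zero_iff.1 x.2)
  have toSeq_sub (x y h k) : toSeq x h k - toSeq y h k = w k • (x.1 (k, h) - y.1 (k, h)) :=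
    (smul_sub _ _ _).symm
  choose Ψ hΨ using fun x : closedBall (0 : ℕ × P →ᵇ E) M =>
    exists_boundedContinuousFunction_smul_eq hw hM (hcont _ (toSeq_cont x))
      fun h => hmaps h _ (toSeq_bound x h)
  have hΨ_contracting : ContractingWith 2⁻¹ Ψ := by
    refine ⟨by norm_num, LipschitzWith.of_dist_le_mul fun x y => ?_⟩
    refine (BoundedContinuousFunction.dist_le (by positivity)).2 fun ⟨k, h⟩ => ?_
    have hxy := hcontract h _ _ _ dist_nonneg (toSeq_bound x h) (toSeq_bound y h)
      (fun k => by
        rw [toSeq_sub, norm_smul, Real.norm_of_nonneg (hw k).le, mul_comm]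
        have := (hw k).le
        gcongr
        exact (dist_eq_norm _ _).symm.le.trans (dist_coe_le_dist (k, h))) k
    rw [← hΨ, ← hΨ, ← smul_sub, norm_smul, Real.norm_of_nonneg (hw k).le, mul_comm] at hxy
    rw [dist_eq_norm]
    refine (le_of_mul_le_mul_right hxy (hw k)).trans_eq ?_
    rw [Subtype.dist_eq, NNReal.coe_inv, NNReal.coe_ofNat]
    ring
  have : CompleteSpace (closedBall (0 : ℕ × P →ᵇ E) M) := isClosed_closedBall.completeSpace_coe
  have : Nonempty (closedBall (0 : ℕ × P →ᵇ E) M) := ⟨⟨0, mem_closedBall_self hM⟩⟩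
  obtain ⟨x, hx⟩ : ∃ x, Ψ x = x := ⟨_, hΨ_contracting.fixedPoint_isFixedPt⟩
  exact ⟨toSeq x, toSeq_cont x, toSeq_bound x, fun h => funext fun k => by rw [← hΨ, hx]⟩

end WeightedFixedPoint

section RiccatiSeries

variable {E : Type*} [NormedAddCommGroup E] [NormedSpace ℂ E]

/-- Let `a` be the coefficients of a power series solution of `σ y' = L₀ y + F + B y + Q y y`. Then
`a k = J (σ (k + 1) • a (k + 1) - riccatiCoeff F B Q a k)` with `J = L₀⁻¹`. Here the unbounded
factor `σ (k + 1)` is cut off at `ε`, which makes the right-hand side a contraction in `a`. -/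
noncomputable def cutoffRiccatiMap (σ ε : ℝ) (J : E →L[ℂ] E) (F : ℕ → E) (B : ℕ → E →L[ℂ] E)
    (Q : ℕ → E →L[ℂ] E →L[ℂ] E) (a : ℕ → E) (k : ℕ) : E :=
  J (min (σ * (k + 1)) ε • a (k + 1) - riccatiCoeff F B Q a k)

/-- The coefficients of the power series solution of `σ y' = L₀ y + F + B y + Q y y` with constant
term `a₀`. -/
noncomputable def riccatiSeries (σ : ℝ) (L₀ : E →L[ℂ] E) (F : ℕ → E) (B : ℕ → E →L[ℂ] E)
    (Q : ℕ → E →L[ℂ] E →L[ℂ] E) (a₀ : E) : ℕ → E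
  | 0 => a₀
  | k + 1 => (σ * (k + 1))⁻¹ • (L₀ (riccatiSeries σ L₀ F B Q a₀ k)
      + riccatiCoeff F B Q (fun j => if j ≤ k then riccatiSeries σ L₀ F B Q a₀ j else 0) k)

variable {σ ε τ C η K M A : ℝ} {J L₀ : E →L[ℂ] E} {F : ℕ → E} {B : ℕ → E →L[ℂ] E}
  {Q : ℕ → E →L[ℂ] E →L[ℂ] E} {a b : ℕ → E} {a₀ : E} {k : ℕ}

lemma norm_cutoff_smul_le {x : E} {D : ℝ} (hσ : 0 ≤ σ) (hε : 0 ≤ ε) (hτ : 0 ≤ τ) (hD : 0 ≤ D)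
    (hx : ‖x‖ ≤ D * catalanWeight τ (k + 1)) :
    ‖min (σ * (k + 1)) ε • x‖ ≤ 4 * τ * ε * D * catalanWeight τ k := by
  have hmin : 0 ≤ min (σ * (k + 1)) ε := le_min (by positivity) hε
  calc ‖min (σ * (k + 1)) ε • x‖ = min (σ * (k + 1)) ε * ‖x‖ := by
        rw [norm_smul, Real.norm_of_nonneg hmin]
    _ ≤ ε * (D * (4 * τ * catalanWeight τ k)) := by
        gcongr
        · exact min_le_right _ _
        · exact hx.trans (by gcongr; exact catalanWeight_succ_le hτ k)
    _ = 4 * τ * ε * D * catalanWeight τ k := by ring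

lemma catalanBounded_cutoffRiccatiMap (hσ : 0 ≤ σ) (hε : 0 ≤ ε) (hτ : 0 ≤ τ)
    (hJ : ‖J‖ ≤ K) (hF : CatalanBounded τ C F) (hB : CatalanBounded τ η B)
    (hQ : CatalanBounded τ η Q) (hKε : 16 * K * τ * ε ≤ 1) (hKη : 16 * K * η * (1 + 8 * M) ≤ 1)
    (hKC : 2 * K * C ≤ M) (ha : CatalanBounded τ M a) :
    CatalanBounded τ M (cutoffRiccatiMap σ ε J F B Q a) := by
  intro k
  have hK : 0 ≤ K := (norm_nonneg J).trans hJ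
  have hη := hB.nonneg
  have hM := ha.nonneg
  have hw := catalanWeight_nonneg hτ k
  have hshift := norm_cutoff_smul_le hσ hε hτ hM (ha (k + 1))
  have hricc := norm_riccatiCoeff_le hτ hM hF hB hQ (k := k) fun j _ => ha j
  calc ‖cutoffRiccatiMap σ ε J F B Q a k‖
      ≤ K * (4 * τ * ε * M * catalanWeight τ k
        + (C + 4 * η * M + 16 * η * M ^ 2) * catalanWeight τ k) :=
        J.le_of_opNorm_le_of_le hJ (norm_sub_le_of_le hshift hricc)
    _ = (K * (4 * τ * ε * M + C + 4 * η * M + 16 * η * M ^ 2)) * catalanWeight τ k := by ring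
    _ ≤ M * catalanWeight τ k := by
        gcongr
        have := mul_nonneg (mul_nonneg hK hη) hM
        nlinarith [mul_le_mul_of_nonneg_right hKε hM, mul_le_mul_of_nonneg_right hKη hM]

lemma norm_cutoffRiccatiMap_sub_le {D : ℝ} (hσ : 0 ≤ σ) (hε : 0 ≤ ε) (hτ : 0 ≤ τ)
    (hJ : ‖J‖ ≤ K) (hB : CatalanBounded τ η B)
    (hQ : CatalanBounded τ η Q) (hKε : 16 * K * τ * ε ≤ 1) (hKη : 16 * K * η * (1 + 8 * M) ≤ 1)
    (ha : CatalanBounded τ M a) (hb : CatalanBounded τ M b) (hab : CatalanBounded τ D (a - b))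
    (k : ℕ) :
    ‖cutoffRiccatiMap σ ε J F B Q a k - cutoffRiccatiMap σ ε J F B Q b k‖
      ≤ D / 2 * catalanWeight τ k := by
  have hw := catalanWeight_nonneg hτ k
  have hD := hab.nonneg
  have hshift := norm_cutoff_smul_le hσ hε hτ hab.nonneg (hab (k + 1))
  have hricc := norm_riccatiCoeff_sub_le (F := F) (k := k) hτ hB hQ ha hb hab
  calc ‖cutoffRiccatiMap σ ε J F B Q a k - cutoffRiccatiMap σ ε J F B Q b k‖
      = ‖J (min (σ * (k + 1)) ε • (a - b) (k + 1)
          - (riccatiCoeff F B Q a k - riccatiCoeff F B Q b k))‖ := by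
        rw [cutoffRiccatiMap, cutoffRiccatiMap, ← map_sub, Pi.sub_apply, smul_sub]
        congr 2
        abel
    _ ≤ K * (4 * τ * ε * D * catalanWeight τ k
        + (4 * η + 32 * η * M) * D * catalanWeight τ k) :=
        J.le_of_opNorm_le_of_le hJ (norm_sub_le_of_le hshift hricc)
    _ = (K * (4 * τ * ε + 4 * η + 32 * η * M)) * D * catalanWeight τ k := by ring
    _ ≤ 1 / 2 * D * catalanWeight τ k := by
        gcongr
        linarith
    _ = D / 2 * catalanWeight τ k := by ring

lemma riccatiSeries_succ (hσ : σ ≠ 0) (k : ℕ) :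
    (σ * (k + 1)) • riccatiSeries σ L₀ F B Q a₀ (k + 1)
      = L₀ (riccatiSeries σ L₀ F B Q a₀ k)
        + riccatiCoeff F B Q (riccatiSeries σ L₀ F B Q a₀) k := by
  rw [riccatiSeries, smul_inv_smul₀ (by positivity)]
  congr 1
  exact riccatiCoeff_congr fun j hj => if_pos hj

lemma riccatiSeries_eq_of_cutoffRiccatiMap_eq (hσ : 0 < σ) (hLJ : ∀ x, L₀ (J x) = x)
    (ha : cutoffRiccatiMap σ ε J F B Q a = a) (k : ℕ) (hk : σ * k ≤ ε) :
    riccatiSeries σ L₀ F B Q (a 0) k = a k := by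
  induction k using Nat.strong_induction_on with
  | h k ih =>
  rcases k with _ | k
  · rw [riccatiSeries]
  have hprev : ∀ j ≤ k, riccatiSeries σ L₀ F B Q (a 0) j = a j := fun j hj =>
    ih j (Nat.lt_succ_of_le hj) ((by gcongr; omega : σ * j ≤ σ * (k + 1 : ℕ)).trans hk)
  have hmin : min (σ * (k + 1)) ε = σ * (k + 1) := min_eq_left (mod_cast hk)
  have hak : L₀ (a k) = (σ * (k + 1)) • a (k + 1) - riccatiCoeff F B Q a k := by
    rw [← congrFun ha k, cutoffRiccatiMap, hLJ, hmin]
  refine smul_right_injective E (by positivity : σ * (k + 1) ≠ 0) ?_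
  beta_reduce
  rw [riccatiSeries_succ hσ.ne', hprev k le_rfl, riccatiCoeff_congr hprev, hak, sub_add_cancel]

lemma continuous_riccatiSeries {P : Type*} [TopologicalSpace P] {σ : P → ℝ} {L₀ : P → E →L[ℂ] E}
    {F : P → ℕ → E} {B : P → ℕ → E →L[ℂ] E} {Q : P → ℕ → E →L[ℂ] E →L[ℂ] E} {a₀ : P → E}
    (hσ : Continuous σ) (hσ0 : ∀ h, σ h ≠ 0) (hL₀ : Continuous L₀)
    (hF : ∀ j, Continuous fun h => F h j) (hB : ∀ j, Continuous fun h => B h j)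
    (hQ : ∀ j, Continuous fun h => Q h j) (ha₀ : Continuous a₀) (k : ℕ) :
    Continuous fun h => riccatiSeries (σ h) (L₀ h) (F h) (B h) (Q h) (a₀ h) k := by
  induction k using Nat.strong_induction_on with
  | h k ih =>
  rcases k with _ | k
  · simpa only [riccatiSeries] using ha₀
  have hprev := fun j (hj : j ≤ k) => ih j (Nat.lt_succ_of_le hj)
  have hinv : Continuous fun h => (σ h * (k + 1))⁻¹ :=
    (hσ.mul continuous_const).inv₀ fun h => mul_ne_zero (hσ0 h) (by positivity)
  refine (hinv.smul ((hL₀.clm_apply (hprev k le_rfl)).add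
    (continuous_riccatiCoeff hF hB hQ hprev))).congr fun h => ?_
  rw [Pi.smul_apply', Pi.add_apply, ← riccatiSeries_succ (hσ0 h),
    inv_smul_smul₀ (mul_ne_zero (hσ0 h) (by positivity))]

/-- Beyond `k = ε / σ` the factor `σ k` is bounded below, so the recursion loses at most a constant
factor at each step. -/
lemma catalanBounded_riccatiSeries (hσ : 0 < σ) (hε : 0 < ε) (hτ : 0 < τ) (hM : 0 ≤ M)
    (hL₀ : ‖L₀‖ ≤ A) (hF : CatalanBounded τ C F) (hB : CatalanBounded τ η B)
    (hQ : CatalanBounded τ η Q) (hτM : A * M + (C + 4 * η * M + 16 * η * M ^ 2) ≤ ε * τ * M)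
    (hinit : ∀ k : ℕ, σ * k ≤ ε →
      ‖riccatiSeries σ L₀ F B Q a₀ k‖ ≤ M * catalanWeight τ k) :
    CatalanBounded τ M (riccatiSeries σ L₀ F B Q a₀) := by
  intro k
  induction k using Nat.strong_induction_on with
  | h k ih =>
  rcases k with _ | k
  · exact hinit 0 (by simpa using hε.le)
  rcases le_total (σ * (k + 1)) ε with hle | hge
  · exact hinit (k + 1) (mod_cast hle)
  have hprev := fun j (hj : j ≤ k) => ih j (Nat.lt_succ_of_le hj)
  have hw := catalanWeight_nonneg hτ.le k
  have hlin := L₀.le_of_opNorm_le_of_le hL₀ (hprev k le_rfl)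
  have hricc := norm_riccatiCoeff_le hτ.le hM hF hB hQ hprev
  refine le_of_mul_le_mul_left ?_ hε
  calc ε * ‖riccatiSeries σ L₀ F B Q a₀ (k + 1)‖
      ≤ ‖(σ * (k + 1)) • riccatiSeries σ L₀ F B Q a₀ (k + 1)‖ := by
        rw [norm_smul, Real.norm_of_nonneg (by positivity)]
        gcongr
    _ ≤ A * (M * catalanWeight τ k)
        + (C + 4 * η * M + 16 * η * M ^ 2) * catalanWeight τ k := by
        rw [riccatiSeries_succ hσ.ne']
        exact norm_add_le_of_le hlin hricc
    _ = (A * M + (C + 4 * η * M + 16 * η * M ^ 2)) * catalanWeight τ k := by ring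
    _ ≤ ε * τ * M * catalanWeight τ k := by gcongr
    _ = ε * (M * (τ * catalanWeight τ k)) := by ring
    _ ≤ ε * (M * catalanWeight τ (k + 1)) := by
        gcongr
        exact mul_catalanWeight_le_succ hτ.le k

theorem exists_continuous_catalanBounded_riccatiSeries [CompleteSpace E] {P : Type*}
    [TopologicalSpace P] {σ : P → ℝ} {J L₀ : P → E →L[ℂ] E} {F : P → ℕ → E} {B : P → ℕ → E →L[ℂ] E}
    {Q : P → ℕ → E →L[ℂ] E →L[ℂ] E} (hσ : Continuous σ) (hσ0 : ∀ h, 0 < σ h) (hJ : Continuous J)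
    (hL₀ : Continuous L₀) (hF : ∀ j, Continuous fun h => F h j)
    (hB : ∀ j, Continuous fun h => B h j) (hQ : ∀ j, Continuous fun h => Q h j)
    (hτ : 0 < τ) (hK : 0 < K) (hM : 0 < M)
    (hLJ : ∀ h x, L₀ h (J h x) = x) (hJK : ∀ h, ‖J h‖ ≤ K) (hL₀A : ∀ h, ‖L₀ h‖ ≤ A)
    (hFC : ∀ h, CatalanBounded τ C (F h)) (hBη : ∀ h, CatalanBounded τ η (B h))
    (hQη : ∀ h, CatalanBounded τ η (Q h)) (hKC : 2 * K * C ≤ M)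
    (hKη : 16 * K * η * (1 + 8 * M) ≤ 1) :
    ∃ τ' ≥ τ, ∃ a₀ : P → E,
      (∀ k, Continuous fun h => riccatiSeries (σ h) (L₀ h) (F h) (B h) (Q h) (a₀ h) k) ∧
      ∀ h, CatalanBounded τ' M (riccatiSeries (σ h) (L₀ h) (F h) (B h) (Q h) (a₀ h)) := by
  obtain ⟨ε, hε, hKε⟩ : ∃ ε > 0, 16 * K * τ * ε ≤ 1 :=
    ⟨1 / (16 * K * τ), by positivity, (mul_one_div_cancel (by positivity)).le⟩
  obtain ⟨a, ha_cont, ha_bound, ha_fixed⟩ := exists_continuous_fixedPoint_of_weighted_contraction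
    (catalanWeight_pos hτ) hM.le (fun h => cutoffRiccatiMap (σ h) ε (J h) (F h) (B h) (Q h))
    (fun a ha k => hJ.clm_apply (((hσ.mul continuous_const).min continuous_const).smul
      (ha (k + 1)) |>.sub (continuous_riccatiCoeff hF hB hQ fun j _ => ha j)))
    (fun h a ha => catalanBounded_cutoffRiccatiMap (hσ0 h).le hε.le hτ.le (hJK h) (hFC h)
      (hBη h) (hQη h) hKε hKη hKC ha)
    (fun h a b D _ ha hb hab => norm_cutoffRiccatiMap_sub_le (hσ0 h).le hε.le hτ.le
      (hJK h) (hBη h) (hQη h) hKε hKη ha hb hab)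
  obtain ⟨τ', hττ', hτ'M⟩ :
      ∃ τ' ≥ τ, A * M + (C + 4 * η * M + 16 * η * M ^ 2) ≤ ε * τ' * M := by
    refine ⟨max τ ((A * M + (C + 4 * η * M + 16 * η * M ^ 2)) / (ε * M)), le_max_left _ _, ?_⟩
    rw [mul_right_comm ε, ← div_le_iff₀' (mul_pos hε hM)]
    exact le_max_right _ _
  refine ⟨τ', hττ', fun h => a h 0, continuous_riccatiSeries hσ (fun h => (hσ0 h).ne') hL₀ hF hB hQ
    (ha_cont 0), fun h => ?_⟩
  refine catalanBounded_riccatiSeries (hσ0 h) hε (hτ.trans_le hττ') hM.le (hL₀A h)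
    ((hFC h).mono hτ.le hττ' le_rfl) ((hBη h).mono hτ.le hττ' le_rfl)
    ((hQη h).mono hτ.le hττ' le_rfl) hτ'M fun k hk => ?_
  rw [riccatiSeries_eq_of_cutoffRiccatiMap_eq (hσ0 h) (hLJ h) (ha_fixed h) k hk]
  exact CatalanBounded.mono (ha_bound h) hτ.le hττ' le_rfl k

end RiccatiSeries

section PowerSum

open Finset.HasAntidiagonal Metric

variable {E G : Type*} [NormedAddCommGroup E] [NormedSpace ℂ E]
  [NormedAddCommGroup G] [NormedSpace ℂ G]

lemma summable_clm_apply_of_summable_norm [CompleteSpace G] {B : ℕ → E →L[ℂ] G} {a : ℕ → E}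
    (hB : Summable fun i => ‖B i‖) (ha : Summable fun i => ‖a i‖) :
    Summable fun p : ℕ × ℕ => B p.1 (a p.2) :=
  Summable.of_norm_bounded (hB.mul_of_nonneg ha (fun _ => norm_nonneg _) fun _ => norm_nonneg _)
    fun p => (B p.1).le_opNorm (a p.2)

lemma tsum_clm_apply_tsum_eq_tsum_cauchyApply [CompleteSpace E] [CompleteSpace G]
    {B : ℕ → E →L[ℂ] G} {a : ℕ → E} (hB : Summable fun i => ‖B i‖)
    (ha : Summable fun i => ‖a i‖) :
    (∑' i, B i) (∑' j, a j) = ∑' k, cauchyApply B a k := by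
  have hsum := summable_clm_apply_of_summable_norm hB ha
  have hsigma := (sigmaAntidiagonalEquivProd (A := ℕ)).summable_iff.2 hsum
  calc (∑' i, B i) (∑' j, a j) = ∑' i, B i (∑' j, a j) :=
        (ContinuousLinearMap.apply ℂ G (∑' j, a j)).map_tsum hB.of_norm
    _ = ∑' i, ∑' j, B i (a j) := tsum_congr fun i => (B i).map_tsum ha.of_norm
    _ = ∑' p : ℕ × ℕ, B p.1 (a p.2) := hsum.tsum_prod.symm
    _ = ∑' q : Σ k, antidiagonal k, B q.2.1.1 (a q.2.1.2) :=
        (Finset.HasAntidiagonal.sigmaAntidiagonalEquivProd.tsum_eq _).symm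
    _ = ∑' k, ∑' p : antidiagonal k, B p.1.1 (a p.1.2) := hsigma.tsum_sigma
    _ = ∑' k, cauchyApply B a k := tsum_congr fun k => by
        rw [tsum_fintype, cauchyApply, Finset.sum_coe_sort (antidiagonal k) fun p => B p.1 (a p.2)]

/-- The sum of the power series with coefficients `a`, centred at `0`. -/
noncomputable def powerSum (a : ℕ → E) (z : ℂ) : E := ∑' k, z ^ k • a k

variable {τ M N : ℝ} {a : ℕ → E} {z : ℂ}

lemma CatalanBounded.norm_pow_smul_le (ha : CatalanBounded τ M a) (hτ : 0 < τ)
    (hz : z ∈ ball 0 (8 * τ)⁻¹) (k : ℕ) : ‖z ^ k • a k‖ ≤ M * (1 / 2) ^ k := by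
  have hM := ha.nonneg
  have hz' : ‖z‖ ≤ (8 * τ)⁻¹ := (mem_ball_zero_iff.1 hz).le
  calc ‖z ^ k • a k‖ = ‖z‖ ^ k * ‖a k‖ := by rw [norm_smul, norm_pow]
    _ ≤ ((8 * τ)⁻¹) ^ k * (M * (4 * τ) ^ k) := by
        gcongr
        exact (ha k).trans (by gcongr; exact catalanWeight_le_pow hτ.le k)
    _ = M * (1 / 2) ^ k := by
        rw [mul_left_comm, ← mul_pow]
        congr 2
        field_simp
        norm_num

lemma CatalanBounded.summable_norm (ha : CatalanBounded τ M a) (hτ : 0 < τ)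
    (hz : z ∈ ball 0 (8 * τ)⁻¹) : Summable fun k => ‖z ^ k • a k‖ :=
  (summable_geometric_two.mul_left M).of_nonneg_of_le (fun _ => norm_nonneg _)
    (ha.norm_pow_smul_le hτ hz)

lemma CatalanBounded.hasSum_powerSum [CompleteSpace E] (ha : CatalanBounded τ M a) (hτ : 0 < τ)
    (hz : z ∈ ball 0 (8 * τ)⁻¹) : HasSum (fun k => z ^ k • a k) (powerSum a z) :=
  (ha.summable_norm hτ hz).of_norm.hasSum

lemma CatalanBounded.norm_powerSum_le (ha : CatalanBounded τ M a) (hτ : 0 < τ)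
    (hz : z ∈ ball 0 (8 * τ)⁻¹) : ‖powerSum a z‖ ≤ M * 2 :=
  tsum_of_norm_bounded (hasSum_geometric_two.mul_left M) (ha.norm_pow_smul_le hτ hz)

lemma CatalanBounded.differentiableOn_powerSum [CompleteSpace E] (ha : CatalanBounded τ M a)
    (hτ : 0 < τ) : DifferentiableOn ℂ (powerSum a) (ball 0 (8 * τ)⁻¹) :=
  Complex.differentiableOn_tsum_of_summable_norm (summable_geometric_two.mul_left M)
    (fun k => by fun_prop) isOpen_ball fun k _ hz => ha.norm_pow_smul_le hτ hz k

lemma CatalanBounded.hasSum_deriv_powerSum [CompleteSpace E] (ha : CatalanBounded τ M a)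
    (hτ : 0 < τ) (hz : z ∈ ball 0 (8 * τ)⁻¹) :
    HasSum (fun k : ℕ => z ^ k • ((k + 1 : ℝ) • a (k + 1))) (deriv (powerSum a) z) := by
  have hderiv := Complex.hasSum_deriv_of_summable_norm (summable_geometric_two.mul_left M)
    (fun k => by fun_prop) isOpen_ball (fun k _ hw => ha.norm_pow_smul_le hτ hw k) hz
  have hterm (k : ℕ) : deriv (fun w => w ^ k • a k) z = (k * z ^ (k - 1)) • a k :=
    ((hasDerivAt_pow k z).smul_const (a k)).deriv
  simp only [hterm] at hderiv
  rw [← hasSum_nat_add_iff' 1, Finset.sum_range_one, Nat.cast_zero, zero_mul, zero_smul,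
    sub_zero] at hderiv
  refine hderiv.congr_fun fun k => ?_
  rw [Nat.add_sub_cancel, Nat.cast_succ, mul_comm, mul_smul, ← Complex.coe_smul]
  push_cast
  rfl

lemma continuous_powerSum [CompleteSpace E] {P : Type*} [TopologicalSpace P] {a : P → ℕ → E}
    (hcont : ∀ k, Continuous fun h => a h k) (ha : ∀ h, CatalanBounded τ M (a h)) (hτ : 0 < τ)
    (hz : z ∈ ball 0 (8 * τ)⁻¹) : Continuous fun h => powerSum (a h) z :=
  continuous_tsum (fun k => (hcont k).const_smul (z ^ k)) (summable_geometric_two.mul_left M)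
    fun k h => (ha h).norm_pow_smul_le hτ hz k

lemma powerSum_cauchyApply [CompleteSpace E] [CompleteSpace G] {B : ℕ → E →L[ℂ] G}
    (hB : CatalanBounded τ N B) (ha : CatalanBounded τ M a) (hτ : 0 < τ)
    (hz : z ∈ ball 0 (8 * τ)⁻¹) :
    powerSum (cauchyApply B a) z = powerSum B z (powerSum a z) := by
  rw [powerSum, powerSum, powerSum, tsum_clm_apply_tsum_eq_tsum_cauchyApply
    (hB.summable_norm hτ hz) (ha.summable_norm hτ hz)]
  refine tsum_congr fun k => ?_
  rw [cauchyApply, cauchyApply, Finset.smul_sum]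
  refine Finset.sum_congr rfl fun p hp => ?_
  rw [← mem_antidiagonal.1 hp, pow_add, mul_smul, map_smul, smul_apply, smul_comm]

lemma CatalanBounded.cauchyApply {B : ℕ → E →L[ℂ] G} (hB : CatalanBounded τ N B)
    (ha : CatalanBounded τ M a) (hτ : 0 ≤ τ) :
    CatalanBounded τ (4 * N * M) (cauchyApply B a) := fun _ =>
  norm_cauchyApply_le hτ hB.nonneg ha.nonneg (fun i _ => hB i) fun i _ => ha i

lemma smul_deriv_powerSum_riccatiSeries [CompleteSpace E] {σ C η : ℝ} {L₀ : E →L[ℂ] E}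
    {F : ℕ → E} {B : ℕ → E →L[ℂ] E} {Q : ℕ → E →L[ℂ] E →L[ℂ] E} {a₀ : E} (hσ : σ ≠ 0)
    (hτ : 0 < τ) (hF : CatalanBounded τ C F) (hB : CatalanBounded τ η B)
    (hQ : CatalanBounded τ η Q) (ha : CatalanBounded τ M (riccatiSeries σ L₀ F B Q a₀))
    (hz : z ∈ ball 0 (8 * τ)⁻¹) :
    let y := powerSum (riccatiSeries σ L₀ F B Q a₀)
    σ • deriv y z = L₀ (y z) + powerSum F z + powerSum B z (y z) + powerSum Q z (y z) (y z) := by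
  intro y
  set a := riccatiSeries σ L₀ F B Q a₀
  have hQa := hQ.cauchyApply ha hτ.le
  have hlhs := (ha.hasSum_deriv_powerSum hτ hz).const_smul σ
  have hlin := ((ha.hasSum_powerSum hτ hz).mapL L₀).add (hF.hasSum_powerSum hτ hz)
  have hBa := (hB.cauchyApply ha hτ.le).hasSum_powerSum hτ hz
  have hQaa := (hQa.cauchyApply ha hτ.le).hasSum_powerSum hτ hz
  rw [powerSum_cauchyApply hB ha hτ hz] at hBa
  rw [powerSum_cauchyApply hQa ha hτ hz, powerSum_cauchyApply hQ ha hτ hz] at hQaa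
  refine hlhs.unique (((hlin.add hBa).add hQaa).congr_fun fun k => ?_)
  rw [map_smul, ← smul_add, ← smul_add, ← smul_add, smul_comm σ, smul_smul, riccatiSeries_succ hσ,
    riccatiCoeff, add_assoc, add_assoc, add_assoc]

end PowerSum

section TaylorCoeff

open Metric

variable {E : Type*} [NormedAddCommGroup E] [NormedSpace ℂ E]

/-- The Taylor coefficients of `f` at `c`, given by the Cauchy integrals over the circle of
radius `r`. -/
noncomputable def taylorCoeff (f : ℂ → E) (c : ℂ) (r : ℝ) (k : ℕ) : E :=
  (cauchyPowerSeries f c r).coeff k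

variable {f : ℂ → E} {c z : ℂ} {r C : ℝ}

lemma taylorCoeff_eq_circleIntegral (f : ℂ → E) (c : ℂ) (r : ℝ) (k : ℕ) :
    taylorCoeff f c r k = (2 * Real.pi * Complex.I : ℂ)⁻¹ •
      ∮ w in C(c, r), (1 / (w - c)) ^ k • (w - c)⁻¹ • f w :=
  cauchyPowerSeries_apply f c r k 1

lemma norm_taylorCoeff_le (hr : 0 < r) (hf : ∀ w ∈ sphere c r, ‖f w‖ ≤ C) (k : ℕ) :
    ‖taylorCoeff f c r k‖ ≤ C * r⁻¹ ^ k := by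
  rw [taylorCoeff_eq_circleIntegral]
  have hbound : ∀ w ∈ sphere c r, ‖(1 / (w - c)) ^ k • (w - c)⁻¹ • f w‖ ≤ r⁻¹ ^ k * (r⁻¹ * C) := by
    intro w hw
    have hfw := hf w hw
    rw [norm_smul, norm_smul, norm_pow, norm_div, norm_one, norm_inv, one_div,
      mem_sphere_iff_norm.1 hw]
    gcongr
  refine (circleIntegral.norm_two_pi_i_inv_smul_integral_le_of_norm_le_const hr.le hbound).trans_eq
    ?_
  field_simp

lemma catalanBounded_taylorCoeff (hr : 0 < r) (hC : 0 ≤ C) (hf : ∀ w ∈ sphere c r, ‖f w‖ ≤ C) :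
    CatalanBounded r⁻¹ C (taylorCoeff f c r) := fun k =>
  (norm_taylorCoeff_le hr hf k).trans
    (mul_le_mul_of_nonneg_left (pow_le_catalanWeight (inv_nonneg.2 hr.le) k) hC)

lemma powerSum_taylorCoeff [CompleteSpace E] (hr : 0 < r)
    (hf : DifferentiableOn ℂ f (closedBall c r)) (hz : z ∈ ball 0 r) :
    powerSum (taylorCoeff f c r) z = f (c + z) := by
  lift r to NNReal using hr.le
  have hsum := (hf.hasFPowerSeriesOnBall (mod_cast hr)).hasSum (y := z)
    (by rwa [eball_coe])
  rw [← hsum.tsum_eq, powerSum]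
  exact tsum_congr fun k => FormalMultilinearSeries.apply_eq_pow_smul_coeff.symm

lemma continuous_taylorCoeff {P : Type*} [TopologicalSpace P] [FirstCountableTopology P]
    {f : P → ℂ → E} (hr : 0 < r) (hbound : ∀ h, ∀ w ∈ sphere c r, ‖f h w‖ ≤ C)
    (hf : ∀ h, ContinuousOn (f h) (sphere c r))
    (hcont : ∀ w ∈ sphere c r, Continuous fun h => f h w) (k : ℕ) :
    Continuous fun h => taylorCoeff (f h) c r k := by
  simp only [taylorCoeff_eq_circleIntegral, circleIntegral]
  have hmem (θ : ℝ) : circleMap c r θ ∈ sphere c r := circleMap_mem_sphere c hr.le θ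
  have hne (θ : ℝ) : circleMap c r θ - c ≠ 0 := sub_ne_zero.2 (circleMap_ne_center hr.ne')
  have hweight : Continuous fun θ : ℝ =>
      deriv (circleMap c r) θ * ((1 / (circleMap c r θ - c)) ^ k * (circleMap c r θ - c)⁻¹) := by
    simp only [deriv_circleMap]
    fun_prop (disch := exact hne)
  have hmeas (h : P) : Continuous fun θ => f h (circleMap c r θ) :=
    (hf h).comp_continuous (continuous_circleMap c r) hmem
  have hintegrable : IntervalIntegrable (fun θ => ‖deriv (circleMap c r) θ *
      ((1 / (circleMap c r θ - c)) ^ k * (circleMap c r θ - c)⁻¹)‖ * C) MeasureTheory.volume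
      0 (2 * Real.pi) := (hweight.norm.mul_const C).intervalIntegrable _ _
  simp only [smul_smul]
  refine Continuous.const_smul ?_ _
  refine intervalIntegral.continuous_of_dominated_interval
    (fun h => (hweight.smul (hmeas h)).aestronglyMeasurable)
    (fun h => Filter.Eventually.of_forall fun θ _ => ?_) hintegrable
    (Filter.Eventually.of_forall fun θ _ => (hcont _ (hmem θ)).const_smul _)
  rw [norm_smul]
  gcongr
  exact hbound h _ (hmem θ)

end TaylorCoeff

section UniformlyAnalyticOn

open Metric

variable {P E F G : Type*} [TopologicalSpace P] [NormedAddCommGroup E] [NormedSpace ℂ E]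
  [NormedAddCommGroup F] [NormedSpace ℂ F] [NormedAddCommGroup G] [NormedSpace ℂ G]

/-- A family `f · h` of functions holomorphic on `U`, with parameter `h ∈ S`, that is bounded by `C`
uniformly in the parameter and pointwise continuous in it. By Cauchy's estimates this is uniform
analyticity in the sense of singular perturbation theory. -/
structure UniformlyAnalyticOn (f : ℂ → P → E) (U : Set ℂ) (S : Set P) (C : ℝ) : Prop where
  differentiableOn : ∀ h ∈ S, DifferentiableOn ℂ (fun z => f z h) U
  continuousOn : ∀ z ∈ U, ContinuousOn (f z) S
  norm_le : ∀ h ∈ S, ∀ z ∈ U, ‖f z h‖ ≤ C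

namespace UniformlyAnalyticOn

variable {f : ℂ → P → E} {g : ℂ → P → F} {U V : Set ℂ} {S T : Set P} {C D : ℝ}

lemma mono (hf : UniformlyAnalyticOn f U S C) (hVU : V ⊆ U) (hTS : T ⊆ S) (hCD : C ≤ D) :
    UniformlyAnalyticOn f V T D where
  differentiableOn h hh := (hf.differentiableOn h (hTS hh)).mono hVU
  continuousOn z hz := (hf.continuousOn z (hVU hz)).mono hTS
  norm_le h hh z hz := (hf.norm_le h (hTS hh) z (hVU hz)).trans hCD

lemma add {g : ℂ → P → E} (hf : UniformlyAnalyticOn f U S C) (hg : UniformlyAnalyticOn g U S D) :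
    UniformlyAnalyticOn (fun z h => f z h + g z h) U S (C + D) where
  differentiableOn h hh := (hf.differentiableOn h hh).add (hg.differentiableOn h hh)
  continuousOn z hz := (hf.continuousOn z hz).add (hg.continuousOn z hz)
  norm_le h hh z hz := norm_add_le_of_le (hf.norm_le h hh z hz) (hg.norm_le h hh z hz)

lemma prodMk (hf : UniformlyAnalyticOn f U S C) (hg : UniformlyAnalyticOn g U S D) :
    UniformlyAnalyticOn (fun z h => (f z h, g z h)) U S (max C D) where
  differentiableOn h hh := (hf.differentiableOn h hh).prodMk (hg.differentiableOn h hh)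
  continuousOn z hz := (hf.continuousOn z hz).prodMk (hg.continuousOn z hz)
  norm_le h hh z hz := max_le_max (hf.norm_le h hh z hz) (hg.norm_le h hh z hz)

lemma clm_apply (L : E →L[ℂ] F) (hf : UniformlyAnalyticOn f U S C) :
    UniformlyAnalyticOn (fun z h => L (f z h)) U S (‖L‖ * C) where
  differentiableOn h hh := L.differentiable.comp_differentiableOn (hf.differentiableOn h hh)
  continuousOn z hz := L.continuous.comp_continuousOn (hf.continuousOn z hz)
  norm_le h hh z hz := L.le_opNorm_of_le (hf.norm_le h hh z hz)

lemma bilin_apply (b : E →L[ℂ] F →L[ℂ] G) (hf : UniformlyAnalyticOn f U S C)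
    (hg : UniformlyAnalyticOn g U S D) :
    UniformlyAnalyticOn (fun z h => b (f z h) (g z h)) U S (‖b‖ * C * D) where
  differentiableOn h hh := by
    have hfh := hf.differentiableOn h hh
    have hgh := hg.differentiableOn h hh
    fun_prop
  continuousOn z hz := by
    have hfz := hf.continuousOn z hz
    have hgz := hg.continuousOn z hz
    fun_prop
  norm_le h hh z hz := b.le_of_opNorm₂_le_of_le le_rfl (hf.norm_le h hh z hz) (hg.norm_le h hh z hz)

lemma restrict (hf : UniformlyAnalyticOn f U S C) :
    UniformlyAnalyticOn (fun z (h : S) => f z h) U univ C where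
  differentiableOn h _ := hf.differentiableOn h h.2
  continuousOn z hz := (hf.continuousOn z hz).domRestrict.continuousOn
  norm_le h _ := hf.norm_le h h.2

lemma extend {f : ℂ → S → E} (hf : UniformlyAnalyticOn f U univ C) :
    UniformlyAnalyticOn (fun z => Function.extend Subtype.val (f z) 0) U S C := by
  have hext (z : ℂ) (h : S) : Function.extend Subtype.val (f z) 0 (h : P) = f z h :=
    Subtype.val_injective.extend_apply _ _ h
  refine ⟨fun h hh => ?_, fun z hz => ?_, fun h hh z hz => ?_⟩
  · simpa only [hext _ ⟨h, hh⟩] using hf.differentiableOn ⟨h, hh⟩ trivial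
  · rw [continuousOn_iff_continuous_domRestrict, domRestrict_eq, Function.extend_comp
      Subtype.val_injective]
    exact continuousOn_univ.1 (hf.continuousOn z hz)
  · simpa only [hext _ ⟨h, hh⟩] using hf.norm_le ⟨h, hh⟩ trivial z hz

lemma catalanBounded_taylorCoeff {c : ℂ} {r : ℝ} (hr : 0 < r) (hC : 0 ≤ C)
    (hf : UniformlyAnalyticOn f (closedBall c r) S C) {h : P} (hh : h ∈ S) :
    CatalanBounded r⁻¹ C (taylorCoeff (fun z => f z h) c r) :=
  _root_.catalanBounded_taylorCoeff hr hC
    fun w hw => hf.norm_le h hh w (sphere_subset_closedBall hw)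

lemma continuous_taylorCoeff [FirstCountableTopology P] {c : ℂ} {r : ℝ} (hr : 0 < r)
    (hf : UniformlyAnalyticOn f (closedBall c r) univ C) (k : ℕ) :
    Continuous fun h => taylorCoeff (fun z => f z h) c r k :=
  _root_.continuous_taylorCoeff hr
    (fun h w hw => hf.norm_le h trivial w (sphere_subset_closedBall hw))
    (fun h => (hf.differentiableOn h trivial).continuousOn.mono sphere_subset_closedBall)
    (fun w hw => continuousOn_univ.1 (hf.continuousOn w (sphere_subset_closedBall hw))) k

end UniformlyAnalyticOn

end UniformlyAnalyticOn

section Riccati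

open Metric

variable {E : Type*} [NormedAddCommGroup E] [NormedSpace ℂ E] [CompleteSpace E]

lemma exists_uniformlyAnalyticOn_riccati_of_bounds {P : Type*} [TopologicalSpace P]
    [FirstCountableTopology P] {c : ℂ} {r C K M η Λ : ℝ} {σ : P → ℝ} {J L₀ : P → E →L[ℂ] E}
    {F : ℂ → P → E} {B : ℂ → P → E →L[ℂ] E} {Q : ℂ → P → E →L[ℂ] E →L[ℂ] E}
    (hr : 0 < r) (hC : 0 ≤ C) (hK : 0 < K) (hM : 0 < M) (hη : 0 ≤ η)
    (hσ : Continuous σ) (hσ0 : ∀ h, 0 < σ h) (hJ : Continuous J) (hL₀ : Continuous L₀)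
    (hLJ : ∀ h x, L₀ h (J h x) = x) (hJK : ∀ h, ‖J h‖ ≤ K) (hL₀Λ : ∀ h, ‖L₀ h‖ ≤ Λ)
    (hF : UniformlyAnalyticOn F (closedBall c r) univ C)
    (hB : UniformlyAnalyticOn B (closedBall c r) univ η)
    (hQ : UniformlyAnalyticOn Q (closedBall c r) univ η)
    (hKC : 2 * K * C ≤ M) (hKη : 16 * K * η * (1 + 8 * M) ≤ 1) :
    ∃ ρ ∈ Ioc 0 r, ∃ y : ℂ → P → E, UniformlyAnalyticOn y (ball c ρ) univ (M * 2) ∧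
      ∀ h, ∀ z ∈ ball c ρ, σ h • deriv (fun w => y w h) z
        = L₀ h (y z h) + F z h + B z h (y z h) + Q z h (y z h) (y z h) := by
  have hr' : 0 < r⁻¹ := inv_pos.2 hr
  have hF_bd (h : P) := hF.catalanBounded_taylorCoeff hr hC (mem_univ h)
  have hB_bd (h : P) := hB.catalanBounded_taylorCoeff hr hη (mem_univ h)
  have hQ_bd (h : P) := hQ.catalanBounded_taylorCoeff hr hη (mem_univ h)
  obtain ⟨τ, hτ, a₀, ha_cont, ha_bd⟩ := exists_continuous_catalanBounded_riccatiSeries hσ hσ0 hJ hL₀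
    (hF.continuous_taylorCoeff hr) (hB.continuous_taylorCoeff hr) (hQ.continuous_taylorCoeff hr)
    hr' hK hM hLJ hJK hL₀Λ hF_bd hB_bd hQ_bd hKC hKη
  have hτ0 : 0 < τ := hr'.trans_le hτ
  have hρr : (8 * τ)⁻¹ ≤ r := by
    rw [inv_le_comm₀ (by positivity) hr]
    linarith
  have hmem {z} (hz : z ∈ ball c (8 * τ)⁻¹) : z - c ∈ ball 0 (8 * τ)⁻¹ := by
    rwa [mem_ball_zero_iff, ← dist_eq_norm]
  refine ⟨(8 * τ)⁻¹, ⟨by positivity, hρr⟩, fun z h => powerSum (riccatiSeries (σ h) (L₀ h)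
    (taylorCoeff (fun z => F z h) c r) (taylorCoeff (fun z => B z h) c r)
    (taylorCoeff (fun z => Q z h) c r) (a₀ h)) (z - c), ⟨fun h _ => ?_, fun z hz => ?_,
    fun h _ z hz => (ha_bd h).norm_powerSum_le hτ0 (hmem hz)⟩, fun h z hz => ?_⟩
  · exact ((ha_bd h).differentiableOn_powerSum hτ0).comp (by fun_prop) fun z => hmem
  · exact (continuous_powerSum ha_cont ha_bd hτ0 (hmem hz)).continuousOn
  · have hz' := ball_subset_ball hρr (hmem hz)
    rw [deriv_comp_sub_const, smul_deriv_powerSum_riccatiSeries (hσ0 h).ne' hτ0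
      ((hF_bd h).mono hr'.le hτ le_rfl) ((hB_bd h).mono hr'.le hτ le_rfl)
      ((hQ_bd h).mono hr'.le hτ le_rfl) (ha_bd h) (hmem hz),
      powerSum_taylorCoeff hr (hF.differentiableOn h trivial) hz',
      powerSum_taylorCoeff hr (hB.differentiableOn h trivial) hz',
      powerSum_taylorCoeff hr (hQ.differentiableOn h trivial) hz', add_sub_cancel]

end Riccati

section RiccatiSolution

open Filter Metric Topology

variable {E : Type*} [NormedAddCommGroup E] [NormedSpace ℂ E]

lemma UniformlyAnalyticOn.exists_closedBall_sub_center {P : Type*} [TopologicalSpace P]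
    {f : ℂ → P → E} {U : Set ℂ} {S : Set P} {C η : ℝ} {c : ℂ} (hf : UniformlyAnalyticOn f U S C)
    (hU : U ∈ 𝓝 c) (hη : 0 < η) :
    ∃ r > 0, closedBall c r ⊆ U ∧
      UniformlyAnalyticOn (fun z h => f z h - f c h) (closedBall c r) S η := by
  obtain ⟨R, hR, hRU⟩ := Metric.mem_nhds_iff.1 hU
  have hsmall : ∀ᶠ r in 𝓝 (0 : ℝ), |2 * C / R| * r < η :=
    (continuous_const_mul _).continuousAt.eventually_lt_const (by simpa using hη)
  obtain ⟨r, ⟨hrη, hrR⟩, hr⟩ :=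
    (((hsmall.and (eventually_lt_nhds hR)).filter_mono nhdsWithin_le_nhds).and
      (self_mem_nhdsWithin (s := Ioi 0))).exists
  have hrball : closedBall c r ⊆ ball c R := closedBall_subset_ball hrR
  have hcU : c ∈ U := mem_of_mem_nhds hU
  refine ⟨r, hr, hrball.trans hRU,
    fun h hh => ((hf.differentiableOn h hh).mono (hrball.trans hRU)).sub_const _,
    fun z hz => (hf.continuousOn z (hRU (hrball hz))).sub (hf.continuousOn c hcU),
    fun h hh z hz => ?_⟩
  have hmaps : MapsTo (f · h) (ball c R) (closedBall (f c h) (2 * C)) := fun w hw => by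
    rw [mem_closedBall, two_mul]
    exact dist_le_norm_add_norm _ _ |>.trans
      (add_le_add (hf.norm_le h hh w (hRU hw)) (hf.norm_le h hh c hcU))
  calc ‖f z h - f c h‖ ≤ 2 * C / R * dist z c := by
        rw [← dist_eq_norm]
        exact Complex.dist_le_div_mul_dist_of_mapsTo_ball
          ((hf.differentiableOn h hh).mono hRU) hmaps (hrball hz)
    _ ≤ |2 * C / R| * r := by
        gcongr
        · exact le_abs_self _
        · exact hz
    _ ≤ η := hrη.le

lemma UniformlyAnalyticOn.eventually_smul_of_tendsto_zero {f : ℂ → ℝ → E} {κ : ℝ → ℂ} {U : Set ℂ}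
    {C η h₀ : ℝ} (hf : UniformlyAnalyticOn f U (Ioc 0 h₀) C) (hh₀ : 0 < h₀)
    (hκ : ContinuousOn κ (Ioc 0 h₀)) (hκ0 : Tendsto κ (𝓝[>] 0) (𝓝 0)) (hη : 0 < η) :
    ∀ᶠ h₁ in 𝓝[>] 0, UniformlyAnalyticOn (fun z h => κ h • f z h) U (Ioc 0 h₁) η := by
  have hsmall : ∀ᶠ h in 𝓝[>] (0 : ℝ), ‖κ h‖ * |C| < η :=
    (hκ0.norm.mul_const |C|).eventually_lt_const (by simpa using hη)
  obtain ⟨h₂, hh₂, hκC⟩ := mem_nhdsGT_iff_exists_Ioc_subset.1 hsmall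
  filter_upwards [Ioc_mem_nhdsGT hh₀, Ioc_mem_nhdsGT hh₂] with h₁ hh₁ hh₁₂
  have hsub : Ioc 0 h₁ ⊆ Ioc 0 h₀ := Ioc_subset_Ioc_right hh₁.2
  refine ⟨fun h hh => (hf.differentiableOn h (hsub hh)).const_smul _,
    fun z hz => (hκ.mono hsub).smul ((hf.continuousOn z hz).mono hsub), fun h hh z hz => ?_⟩
  calc ‖κ h • f z h‖ ≤ ‖κ h‖ * |C| := by
        rw [norm_smul]
        gcongr
        exact (hf.norm_le h (hsub hh) z hz).trans (le_abs_self C)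
    _ ≤ η := (hκC (Ioc_subset_Ioc_right hh₁₂.2 hh)).le

lemma continuousOn_ringInverse {P R : Type*} [TopologicalSpace P] [NormedRing R]
    [HasSummableGeomSeries R] {A : P → R} {S : Set P} (hA : ContinuousOn A S)
    (hunit : ∀ h ∈ S, IsUnit (A h)) : ContinuousOn (fun h => Ring.inverse (A h)) S := fun h hh => by
  obtain ⟨u, hu⟩ := hunit h hh
  exact (hu ▸ NormedRing.inverse_continuousAt u).comp_continuousWithinAt (hA h hh)

theorem exists_uniformlyAnalyticOn_riccati [CompleteSpace E] {U : Set ℂ} {c : ℂ} {h₀ Λ C K : ℝ}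
    {A B : ℂ → ℝ → E →L[ℂ] E} {F : ℂ → ℝ → E} {Q : ℂ → ℝ → E →L[ℂ] E →L[ℂ] E}
    (hU : U ∈ 𝓝 c) (hh₀ : 0 < h₀) (hA : UniformlyAnalyticOn A U (Ioc 0 h₀) Λ)
    (hF : UniformlyAnalyticOn F U (Ioc 0 h₀) C)
    (hB : ∀ η > 0, ∀ᶠ h₁ in 𝓝[>] 0, UniformlyAnalyticOn B U (Ioc 0 h₁) η)
    (hQ : ∀ η > 0, ∀ᶠ h₁ in 𝓝[>] 0, UniformlyAnalyticOn Q U (Ioc 0 h₁) η)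
    (hunit : ∀ h ∈ Ioc 0 h₀, IsUnit (A c h))
    (hinv : ∀ h ∈ Ioc 0 h₀, ‖Ring.inverse (A c h)‖ ≤ K) :
    ∃ ρ > 0, ball c ρ ⊆ U ∧ ∃ h₁ ∈ Ioc 0 h₀, ∃ (M : ℝ) (y : ℂ → ℝ → E),
      UniformlyAnalyticOn y (ball c ρ) (Ioc 0 h₁) M ∧
      ∀ h ∈ Ioc 0 h₁, ∀ z ∈ ball c ρ, (h : ℂ) • deriv (fun w => y w h) z
        = A z h (y z h) + F z h + B z h (y z h) + Q z h (y z h) (y z h) := by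
  have hcU : c ∈ U := mem_of_mem_nhds hU
  have hC : 0 ≤ C := (norm_nonneg _).trans (hF.norm_le h₀ ⟨hh₀, le_rfl⟩ c hcU)
  have hK : 0 ≤ K := (norm_nonneg _).trans (hinv h₀ ⟨hh₀, le_rfl⟩)
  set M := 2 * (K + 1) * C + 1
  set η := (16 * (K + 1) * (1 + 8 * M))⁻¹
  have hη0 : 0 < η / 2 := by positivity
  have hKη : 16 * (K + 1) * η * (1 + 8 * M) = 1 := by
    rw [mul_right_comm]
    exact mul_inv_cancel₀ (by positivity)
  obtain ⟨r, hr, hrU, hA_sub⟩ := hA.exists_closedBall_sub_center hU hη0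
  obtain ⟨h₁, ⟨hB, hQ⟩, hh₁⟩ := (((hB _ hη0).and (hQ _ hη0)).and (Ioc_mem_nhdsGT hh₀)).exists
  have hsub : Ioc 0 h₁ ⊆ Ioc 0 h₀ := Ioc_subset_Ioc_right hh₁.2
  have hA_cont : ContinuousOn (A c) (Ioc 0 h₁) := (hA.continuousOn c hcU).mono hsub
  have hunit' (h : Ioc 0 h₁) := hunit h (hsub h.2)
  have hAB := (hA_sub.mono subset_rfl hsub le_rfl).add (hB.mono hrU subset_rfl le_rfl)
  obtain ⟨ρ, hρ, y, hy, hy_eq⟩ := exists_uniformlyAnalyticOn_riccati_of_bounds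
    (P := Ioc 0 h₁) (K := K + 1) (M := M) (η := η) hr hC (by positivity) (by positivity)
    (by positivity) continuous_subtype_val (fun h => h.2.1)
    (continuousOn_ringInverse hA_cont fun h hh => hunit h (hsub hh)).domRestrict hA_cont.domRestrict
    (fun h x => DFunLike.congr_fun (Ring.mul_inverse_cancel _ (hunit' h)) x)
    (fun h => (hinv h (hsub h.2)).trans (by linarith)) (fun h => hA.norm_le h (hsub h.2) c hcU)
    (hF.mono hrU hsub le_rfl).restrict (hAB.mono subset_rfl subset_rfl (add_halves η).le).restrict
    (hQ.mono hrU subset_rfl (half_le_self (by positivity))).restrict (by linarith) hKη.le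
  refine ⟨ρ, hρ.1, (ball_subset_closedBall.trans (closedBall_subset_closedBall hρ.2)).trans hrU,
    h₁, hh₁, M * 2, _, hy.extend, fun h hh z hz => ?_⟩
  lift h to Ioc 0 h₁ using hh
  simp only [Subtype.val_injective.extend_apply]
  rw [Complex.coe_smul, hy_eq h z hz, domRestrict_apply, add_apply, sub_apply]
  abel

end RiccatiSolution

section Sylvester

/-- The topology of the operator norm, preferred over the product topology: the two are equal, but
not by reducible unfolding, which instance search for norms on spaces of operators needs. -/
noncomputable abbrev matrixNormTopology {m n : Type*} [Fintype m] [Fintype n] :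
    TopologicalSpace (Matrix m n ℂ) :=
  Matrix.linftyOpNormedAddCommGroup.toPseudoMetricSpace.toUniformSpace.toTopologicalSpace

attribute [local instance] matrixNormTopology

lemma pow_finrank_le_norm_det {𝕜 V : Type*} [NormedField 𝕜] [IsAlgClosed 𝕜] [AddCommGroup V]
    [Module 𝕜 V] [FiniteDimensional 𝕜 V] {f : Module.End 𝕜 V} {δ : ℝ} (hδ : 0 ≤ δ)
    (hf : ∀ μ, f.HasEigenvalue μ → δ ≤ ‖μ‖) : δ ^ Module.finrank 𝕜 V ≤ ‖LinearMap.det f‖ := by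
  have hsplits := IsAlgClosed.splits f.charpoly
  calc δ ^ Module.finrank 𝕜 V = (f.charpoly.roots.map fun _ => δ).prod := by
        rw [Multiset.map_const', Multiset.prod_replicate, ← hsplits.natDegree_eq_card_roots,
          f.charpoly_natDegree]
    _ ≤ (f.charpoly.roots.map norm).prod :=
        Multiset.prod_map_le_prod_map₀ _ _ (fun _ _ => hδ) fun μ hμ =>
          hf μ ((f.hasEigenvalue_iff_isRoot_charpoly μ).2 (Polynomial.isRoot_of_mem_roots hμ))
    _ = ‖LinearMap.det f‖ := by
        rw [Module.End.det_eq_prod_roots_charpoly_of_splits hsplits]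
        exact (map_multiset_prod (normHom : 𝕜 →*₀ ℝ) _).symm

/-- The operators with `‖L‖ ≤ M` and `δ ^ finrank ≤ ‖det L‖` form a compact set of units, on which
inversion is continuous. -/
lemma exists_norm_ringInverse_le_of_hasEigenvalue {E : Type*} [NormedAddCommGroup E]
    [NormedSpace ℂ E] [FiniteDimensional ℂ E] (M : ℝ) {δ : ℝ} (hδ : 0 < δ) :
    ∃ K : ℝ, ∀ L : E →L[ℂ] E, ‖L‖ ≤ M →
      (∀ μ, Module.End.HasEigenvalue (L : E →ₗ[ℂ] E) μ → δ ≤ ‖μ‖) →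
      IsUnit L ∧ ‖Ring.inverse L‖ ≤ K := by
  have := FiniteDimensional.proper ℂ (E →L[ℂ] E)
  have := FiniteDimensional.complete ℂ E
  let S := {L : E →L[ℂ] E | δ ^ Module.finrank ℂ E ≤ ‖L.det‖} ∩ Metric.closedBall 0 M
  have hS : IsCompact S := (isCompact_closedBall 0 M).inter_left
    (isClosed_le continuous_const ContinuousLinearMap.continuous_det.norm)
  have hunit : ∀ L ∈ S, IsUnit L := fun L hL =>
    ContinuousLinearMap.isUnit_iff_isUnit_toLinearMap.2 <| (LinearMap.isUnit_iff_isUnit_det _).2 <|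
      (norm_pos_iff.1 ((pow_pos hδ _).trans_le hL.1)).isUnit
  obtain ⟨K, hK⟩ := hS.exists_bound_of_continuousOn (continuousOn_ringInverse continuousOn_id hunit)
  refine ⟨K, fun L hLM hL => ?_⟩
  have hLS : L ∈ S := ⟨pow_finrank_le_norm_det hδ.le hL, mem_closedBall_zero_iff.2 hLM⟩
  exact ⟨hunit L hLS, hK L hLS⟩

variable {m n : Type*} [Fintype m] [Fintype n]

section Intertwining

variable {𝕜 : Type*} [DecidableEq m] [DecidableEq n] {Y : Matrix m n 𝕜}

open Polynomial

lemma aeval_mul_eq_mul_aeval_of_mul_eq_mul [CommRing 𝕜] {A : Matrix m m 𝕜} {B : Matrix n n 𝕜}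
    (hY : A * Y = Y * B) (p : 𝕜[X]) : aeval A p * Y = Y * aeval B p := by
  induction p using Polynomial.induction_on' with
  | add p q hp hq => rw [map_add, map_add, Matrix.add_mul, Matrix.mul_add, hp, hq]
  | monomial k a =>
    have hpow : A ^ k * Y = Y * B ^ k := by
      induction k with
      | zero => rw [pow_zero, pow_zero, Matrix.one_mul, Matrix.mul_one]
      | succ k ih => rw [pow_succ, pow_succ, Matrix.mul_assoc, hY, ← Matrix.mul_assoc, ih,
          Matrix.mul_assoc]
    rw [aeval_monomial, aeval_monomial, ← Algebra.smul_def, ← Algebra.smul_def, Matrix.smul_mul,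
      Matrix.mul_smul, hpow]

/-- By Cayley–Hamilton, `p(A) Y = Y p(B) = 0` for the characteristic polynomial `p` of `B`, so that
`p(A)` is singular. -/
lemma spectrum_inter_spectrum_nonempty_of_mul_eq_mul [Field 𝕜] [IsAlgClosed 𝕜] {A : Matrix m m 𝕜}
    {B : Matrix n n 𝕜} (hY : A * Y = Y * B) (hY0 : Y ≠ 0) :
    (spectrum 𝕜 A ∩ spectrum 𝕜 B).Nonempty := by
  have hn : Nonempty n := by
    contrapose! hY0
    exact Subsingleton.elim _ _
  have hpY : aeval A B.charpoly * Y = 0 := by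
    rw [aeval_mul_eq_mul_aeval_of_mul_eq_mul hY, B.aeval_self_charpoly, Matrix.mul_zero]
  have hsing : (0 : 𝕜) ∈ spectrum 𝕜 (aeval A B.charpoly) := by
    rw [spectrum.zero_mem_iff]
    rintro ⟨u, hu⟩
    refine hY0 ?_
    rw [← Matrix.one_mul Y, ← u.inv_mul, Matrix.mul_assoc, hu, hpY, Matrix.mul_zero]
  have hdeg : 0 < B.charpoly.degree := by
    rw [B.charpoly_degree_eq_dim]
    exact_mod_cast Fintype.card_pos
  rw [spectrum.map_polynomial_aeval_of_degree_pos _ _ hdeg] at hsing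
  obtain ⟨μ, hμA, hμ⟩ := hsing
  exact ⟨μ, hμA, Matrix.mem_spectrum_iff_isRoot_charpoly.2 hμ⟩

end Intertwining

/-- Matrix multiplication as a continuous bilinear map. -/
noncomputable def matrixMulCLM (l m n : Type*) [Fintype l] [Fintype m] [Fintype n] :
    Matrix l m ℂ →L[ℂ] Matrix m n ℂ →L[ℂ] Matrix l n ℂ :=
  LinearMap.mkContinuous₂ (LinearMap.mk₂ ℂ (fun X Y => X * Y) Matrix.add_mul Matrix.smul_mul
    Matrix.mul_add fun a X Y => Matrix.mul_smul X a Y) 1 fun X Y => by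
      rw [one_mul]
      exact Matrix.linfty_opNorm_mul X Y

/-- The Sylvester operator `Y ↦ A Y - Y B`, depending linearly on the pair `(A, B)`. -/
noncomputable def sylvesterCLM (m n : Type*) [Fintype m] [Fintype n] :
    Matrix m m ℂ × Matrix n n ℂ →L[ℂ] Matrix m n ℂ →L[ℂ] Matrix m n ℂ :=
  (matrixMulCLM m m n).comp (ContinuousLinearMap.fst ℂ _ _) -
    (matrixMulCLM m n n).flip.comp (ContinuousLinearMap.snd ℂ _ _)

lemma sylvesterCLM_apply (A : Matrix m m ℂ) (B : Matrix n n ℂ) (Y : Matrix m n ℂ) :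
    sylvesterCLM m n (A, B) Y = A * Y - Y * B :=
  rfl

lemma exists_mem_spectrum_of_hasEigenvalue_sylvesterCLM [DecidableEq m] [DecidableEq n]
    {A : Matrix m m ℂ} {B : Matrix n n ℂ} {μ : ℂ}
    (hμ : Module.End.HasEigenvalue
      (sylvesterCLM m n (A, B) : Matrix m n ℂ →ₗ[ℂ] Matrix m n ℂ) μ) :
    ∃ μ₁ ∈ spectrum ℂ A, ∃ μ₂ ∈ spectrum ℂ B, μ = μ₁ - μ₂ := by
  obtain ⟨Y, hY⟩ := hμ.exists_hasEigenvector
  have hAY : A * Y - Y * B = μ • Y := hY.apply_eq_smul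
  have hintertwine : A * Y = Y * (algebraMap ℂ _ μ + B) := by
    rw [Matrix.mul_add, Algebra.algebraMap_eq_smul_one, Matrix.mul_smul, Matrix.mul_one, ← hAY,
      sub_add_cancel]
  obtain ⟨μ₁, hμ₁, hμ₁B⟩ := spectrum_inter_spectrum_nonempty_of_mul_eq_mul hintertwine hY.2
  rw [← spectrum.singleton_add_eq, singleton_add, mem_image] at hμ₁B
  obtain ⟨μ₂, hμ₂, rfl⟩ := hμ₁B
  exact ⟨μ + μ₂, hμ₁, μ₂, hμ₂, by ring⟩

lemma exists_norm_ringInverse_sylvesterCLM_le [DecidableEq m] [DecidableEq n] (M : ℝ) {δ : ℝ}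
    (hδ : 0 < δ) :
    ∃ K : ℝ, ∀ (A : Matrix m m ℂ) (B : Matrix n n ℂ), ‖A‖ ≤ M → ‖B‖ ≤ M →
      (∀ μ₁ ∈ spectrum ℂ A, ∀ μ₂ ∈ spectrum ℂ B, δ ≤ ‖μ₁ - μ₂‖) →
      IsUnit (sylvesterCLM m n (A, B)) ∧ ‖Ring.inverse (sylvesterCLM m n (A, B))‖ ≤ K := by
  obtain ⟨K, hK⟩ := exists_norm_ringInverse_le_of_hasEigenvalue (E := Matrix m n ℂ)
    (‖sylvesterCLM m n‖ * M) hδ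
  refine ⟨K, fun A B hA hB hsep => hK _ ?_ fun μ hμ => ?_⟩
  · exact (sylvesterCLM m n).le_opNorm_of_le (norm_prod_le_iff.2 ⟨hA, hB⟩)
  · obtain ⟨μ₁, hμ₁, μ₂, hμ₂, rfl⟩ := exists_mem_spectrum_of_hasEigenvalue_sylvesterCLM hμ
    exact hsep μ₁ hμ₁ μ₂ hμ₂

end Sylvester

section BlockDiagonalization

open Filter Metric Topology

attribute [local instance] matrixNormTopology

variable {l m n o : Type*} [Fintype l] [Fintype m] [Fintype n] [Fintype o]

/-- The right-hand side of the Riccati equation `h α' = A α - α B + ⋯` expressing that the graph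
`W₁ = κ α W₂` is invariant under `h W' = (blockdiag(A, B) + κ Θ) W`. -/
def blockRiccati (κ : ℂ) (A : Matrix m m ℂ) (B : Matrix n n ℂ) (Θ : Matrix (m ⊕ n) (m ⊕ n) ℂ)
    (α : Matrix m n ℂ) : Matrix m n ℂ :=
  A * α - α * B + Θ.toBlocks₁₂ + κ • (Θ.toBlocks₁₁ * α - α * Θ.toBlocks₂₂)
    - κ ^ 2 • (α * Θ.toBlocks₂₁ * α)

/-- The correction to the first diagonal block after the change of variables `W₂ = Z₂ + κ α Z₁`. -/
def diagonalCorrection (κ : ℂ) (Θ : Matrix (m ⊕ n) (m ⊕ n) ℂ) (α : Matrix n m ℂ) : Matrix m m ℂ :=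
  Θ.toBlocks₁₁ + κ • (Θ.toBlocks₁₂ * α)

lemma blockDiagonal_mul_sub_mul_blockDiagonal [DecidableEq m] [DecidableEq n] (κ : ℂ)
    (A : Matrix m m ℂ) (B : Matrix n n ℂ) (Θ : Matrix (m ⊕ n) (m ⊕ n) ℂ) (α₁₂ : Matrix m n ℂ)
    (α₂₁ : Matrix n m ℂ) :
    (Matrix.fromBlocks A 0 0 B + κ • Θ) * Matrix.fromBlocks 1 (κ • α₁₂) (κ • α₂₁) 1
      - Matrix.fromBlocks 1 (κ • α₁₂) (κ • α₂₁) 1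
        * Matrix.fromBlocks (A + κ • diagonalCorrection κ Θ α₂₁) 0 0
          (B + κ • diagonalCorrection κ (Θ.submatrix Sum.swap Sum.swap) α₁₂)
      = Matrix.fromBlocks 0 (κ • blockRiccati κ A B Θ α₁₂)
        (κ • blockRiccati κ B A (Θ.submatrix Sum.swap Sum.swap) α₂₁) 0 := by
  set Φ := Θ.submatrix Sum.swap Sum.swap
  have hΦ₁₁ : Φ.toBlocks₁₁ = Θ.toBlocks₂₂ := rfl
  have hΦ₁₂ : Φ.toBlocks₁₂ = Θ.toBlocks₂₁ := rfl
  have hΦ₂₁ : Φ.toBlocks₂₁ = Θ.toBlocks₁₂ := rfl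
  have hΦ₂₂ : Φ.toBlocks₂₂ = Θ.toBlocks₁₁ := rfl
  rw [sub_eq_iff_eq_add]
  nth_rw 1 [← Θ.fromBlocks_toBlocks]
  simp only [Matrix.fromBlocks_smul, Matrix.fromBlocks_add, Matrix.fromBlocks_multiply,
    blockRiccati, diagonalCorrection, hΦ₁₁, hΦ₁₂, hΦ₂₁, hΦ₂₂]
  congr 1 <;>
  · simp only [Matrix.add_mul, Matrix.mul_add, Matrix.smul_mul, Matrix.mul_smul, Matrix.mul_assoc,
      Matrix.one_mul, Matrix.mul_one, Matrix.zero_mul, Matrix.mul_zero]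
    module

lemma hasDerivAt_fromBlocks {A : ℂ → Matrix l m ℂ} {B : ℂ → Matrix l n ℂ} {C : ℂ → Matrix o m ℂ}
    {D : ℂ → Matrix o n ℂ} {A' B' C' D'} {z : ℂ} (hA : HasDerivAt A A' z) (hB : HasDerivAt B B' z)
    (hC : HasDerivAt C C' z) (hD : HasDerivAt D D' z) :
    HasDerivAt (fun w => Matrix.fromBlocks (A w) (B w) (C w) (D w))
      (Matrix.fromBlocks A' B' C' D') z := by
  let blocks : (Matrix l m ℂ × Matrix l n ℂ) × Matrix o m ℂ × Matrix o n ℂ →ₗ[ℂ]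
      Matrix (l ⊕ o) (m ⊕ n) ℂ :=
    { toFun X := Matrix.fromBlocks X.1.1 X.1.2 X.2.1 X.2.2
      map_add' _ _ := (Matrix.fromBlocks_add ..).symm
      map_smul' _ _ := (Matrix.fromBlocks_smul ..).symm }
  exact blocks.toContinuousLinearMap.hasFDerivAt.comp_hasDerivAt z
    ((hA.prodMk hB).prodMk (hC.prodMk hD))

lemma smul_deriv_fromBlocks_of_blockRiccati [DecidableEq m] [DecidableEq n] {h κ z : ℂ}
    {A : Matrix m m ℂ} {B : Matrix n n ℂ} {Θ : Matrix (m ⊕ n) (m ⊕ n) ℂ} {α₁₂ : ℂ → Matrix m n ℂ}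
    {α₂₁ : ℂ → Matrix n m ℂ} (hα₁₂ : DifferentiableAt ℂ α₁₂ z) (hα₂₁ : DifferentiableAt ℂ α₂₁ z)
    (hα₁₂_eq : h • deriv α₁₂ z = blockRiccati κ A B Θ (α₁₂ z))
    (hα₂₁_eq : h • deriv α₂₁ z = blockRiccati κ B A (Θ.submatrix Sum.swap Sum.swap) (α₂₁ z)) :
    h • deriv (fun w => Matrix.fromBlocks 1 (κ • α₁₂ w) (κ • α₂₁ w) 1) z
      = (Matrix.fromBlocks A 0 0 B + κ • Θ) * Matrix.fromBlocks 1 (κ • α₁₂ z) (κ • α₂₁ z) 1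
        - Matrix.fromBlocks 1 (κ • α₁₂ z) (κ • α₂₁ z) 1
          * Matrix.fromBlocks (A + κ • diagonalCorrection κ Θ (α₂₁ z)) 0 0
            (B + κ • diagonalCorrection κ (Θ.submatrix Sum.swap Sum.swap) (α₁₂ z)) := by
  have hT := hasDerivAt_fromBlocks (hasDerivAt_const z 1) (hα₁₂.hasDerivAt.const_smul κ)
    (hα₂₁.hasDerivAt.const_smul κ) (hasDerivAt_const z 1)
  calc h • deriv (fun w => Matrix.fromBlocks 1 (κ • α₁₂ w) (κ • α₂₁ w) 1) z
      = h • Matrix.fromBlocks 0 (κ • deriv α₁₂ z) (κ • deriv α₂₁ z) 0 := congrArg (h • ·) hT.deriv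
    _ = _ := by
        rw [Matrix.fromBlocks_smul, smul_zero, smul_zero, blockDiagonal_mul_sub_mul_blockDiagonal,
          ← hα₁₂_eq, ← hα₂₁_eq, smul_comm h κ, smul_comm h κ]

/-- Restriction to a block of rows and columns as a continuous linear map. -/
noncomputable def submatrixCLM (r : l → m) (s : o → n) : Matrix m n ℂ →L[ℂ] Matrix l o ℂ :=
  LinearMap.toContinuousLinearMap
    { toFun X := X.submatrix r s
      map_add' _ _ := rfl
      map_smul' _ _ := rfl }

/-- The quadratic term `(Y, W) ↦ -Y X W` of the Riccati equation, depending linearly on `X`. -/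
noncomputable def negMulMulCLM (m n : Type*) [Fintype m] [Fintype n] :
    Matrix n m ℂ →L[ℂ] Matrix m n ℂ →L[ℂ] Matrix m n ℂ →L[ℂ] Matrix m n ℂ :=
  -((ContinuousLinearMap.compL ℂ _ _ _ (matrixMulCLM m m n)).comp (matrixMulCLM m n m).flip)

lemma negMulMulCLM_apply (X : Matrix n m ℂ) (Y W : Matrix m n ℂ) :
    negMulMulCLM m n X Y W = -(Y * X * W) := rfl

lemma exists_uniformlyAnalyticOn_blockRiccati [DecidableEq m] [DecidableEq n] {U : Set ℂ} {c : ℂ}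
    {h₀ C D δ : ℝ} {κ : ℝ → ℂ} {A : ℂ → ℝ → Matrix m m ℂ} {B : ℂ → ℝ → Matrix n n ℂ}
    {Θ : ℂ → ℝ → Matrix (m ⊕ n) (m ⊕ n) ℂ} (hU : U ∈ 𝓝 c) (hh₀ : 0 < h₀)
    (hκ : ContinuousOn κ (Ioc 0 h₀)) (hκ0 : Tendsto κ (𝓝[>] 0) (𝓝 0))
    (hA : UniformlyAnalyticOn A U (Ioc 0 h₀) C) (hB : UniformlyAnalyticOn B U (Ioc 0 h₀) C)
    (hΘ : UniformlyAnalyticOn Θ U (Ioc 0 h₀) D) (hδ : 0 < δ)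
    (hsep : ∀ h ∈ Ioc 0 h₀, ∀ μ₁ ∈ spectrum ℂ (A c h), ∀ μ₂ ∈ spectrum ℂ (B c h), δ ≤ ‖μ₁ - μ₂‖) :
    ∃ ρ > 0, ball c ρ ⊆ U ∧ ∃ h₁ ∈ Ioc 0 h₀, ∃ (M : ℝ) (α : ℂ → ℝ → Matrix m n ℂ),
      UniformlyAnalyticOn α (ball c ρ) (Ioc 0 h₁) M ∧
      ∀ h ∈ Ioc 0 h₁, ∀ z ∈ ball c ρ, (h : ℂ) • deriv (fun w => α w h) z
        = blockRiccati (κ h) (A z h) (B z h) (Θ z h) (α z h) := by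
  have hcU : c ∈ U := mem_of_mem_nhds hU
  obtain ⟨K, hK⟩ := exists_norm_ringInverse_sylvesterCLM_le (m := m) (n := n) C hδ
  have hK' (h) (hh : h ∈ Ioc 0 h₀) :=
    hK _ _ (hA.norm_le h hh c hcU) (hB.norm_le h hh c hcU) (hsep h hh)
  have hΘ₁₁ := hΘ.clm_apply (submatrixCLM Sum.inl Sum.inl)
  have hΘ₁₂ := hΘ.clm_apply (submatrixCLM Sum.inl Sum.inr)
  have hΘ₂₁ := hΘ.clm_apply (submatrixCLM Sum.inr Sum.inl)
  have hΘ₂₂ := hΘ.clm_apply (submatrixCLM Sum.inr Sum.inr)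
  have hlin (η) (hη : 0 < η) := ((hΘ₁₁.prodMk hΘ₂₂).clm_apply
    (sylvesterCLM m n)).eventually_smul_of_tendsto_zero hh₀ hκ hκ0 hη
  have hquad (η) (hη : 0 < η) := (hΘ₂₁.clm_apply
    (F := Matrix m n ℂ →L[ℂ] Matrix m n ℂ →L[ℂ] Matrix m n ℂ)
    (negMulMulCLM m n)).eventually_smul_of_tendsto_zero hh₀ (hκ.fun_pow 2)
    (by simpa using hκ0.pow 2) hη
  obtain ⟨ρ, hρ, hρU, h₁, hh₁, M, α, hα, hα_eq⟩ := exists_uniformlyAnalyticOn_riccati hU hh₀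
    ((hA.prodMk hB).clm_apply (sylvesterCLM m n)) hΘ₁₂ hlin hquad
    (fun h hh => (hK' h hh).1) (fun h hh => (hK' h hh).2)
  refine ⟨ρ, hρ, hρU, h₁, hh₁, M, α, hα, fun h hh z hz => ?_⟩
  rw [hα_eq h hh z hz, smul_apply, smul_apply, smul_apply, sylvesterCLM_apply,
    sylvesterCLM_apply, negMulMulCLM_apply, smul_neg, ← sub_eq_add_neg]
  rfl

lemma UniformlyAnalyticOn.eventually_diagonalCorrection {U : Set ℂ} {h₀ C D : ℝ} {κ : ℝ → ℂ}
    {Θ : ℂ → ℝ → Matrix (m ⊕ n) (m ⊕ n) ℂ} {α : ℂ → ℝ → Matrix n m ℂ}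
    (hΘ : UniformlyAnalyticOn Θ U (Ioc 0 h₀) C) (hα : UniformlyAnalyticOn α U (Ioc 0 h₀) D)
    (hh₀ : 0 < h₀) (hκ : ContinuousOn κ (Ioc 0 h₀)) (hκ0 : Tendsto κ (𝓝[>] 0) (𝓝 0)) :
    ∃ M, ∀ᶠ h₁ in 𝓝[>] 0, UniformlyAnalyticOn
      (fun z h => diagonalCorrection (κ h) (Θ z h) (α z h)) U (Ioc 0 h₁) M := by
  have hΘ₁₁ := hΘ.clm_apply (submatrixCLM Sum.inl Sum.inl)
  have hΘ₁₂ := hΘ.clm_apply (submatrixCLM Sum.inl Sum.inr)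
  have hprod := hΘ₁₂.bilin_apply (matrixMulCLM m n m) hα
  use ‖submatrixCLM (Sum.inl : m → m ⊕ n) (Sum.inl : m → m ⊕ n)‖ * C + 1
  filter_upwards [hprod.eventually_smul_of_tendsto_zero hh₀ hκ hκ0 one_pos, Ioc_mem_nhdsGT hh₀]
    with h₁ hsmul hh₁
  exact (hΘ₁₁.mono subset_rfl (Ioc_subset_Ioc_right hh₁.2) le_rfl).add hsmul

lemma exists_uniformlyAnalyticOn_blockRiccati_pair [DecidableEq m] [DecidableEq n] {U : Set ℂ}
    {c : ℂ} {h₀ C D δ : ℝ} {κ : ℝ → ℂ} {A : ℂ → ℝ → Matrix m m ℂ} {B : ℂ → ℝ → Matrix n n ℂ}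
    {Θ : ℂ → ℝ → Matrix (m ⊕ n) (m ⊕ n) ℂ} (hU : U ∈ 𝓝 c) (hh₀ : 0 < h₀)
    (hκ : ContinuousOn κ (Ioc 0 h₀)) (hκ0 : Tendsto κ (𝓝[>] 0) (𝓝 0))
    (hA : UniformlyAnalyticOn A U (Ioc 0 h₀) C) (hB : UniformlyAnalyticOn B U (Ioc 0 h₀) C)
    (hΘ : UniformlyAnalyticOn Θ U (Ioc 0 h₀) D) (hδ : 0 < δ)
    (hsep : ∀ h ∈ Ioc 0 h₀, ∀ μ₁ ∈ spectrum ℂ (A c h), ∀ μ₂ ∈ spectrum ℂ (B c h), δ ≤ ‖μ₁ - μ₂‖) :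
    ∃ V, IsOpen V ∧ c ∈ V ∧ V ⊆ U ∧ ∃ h₁ ∈ Ioc 0 h₀, ∃ (M : ℝ) (α₁₂ : ℂ → ℝ → Matrix m n ℂ)
      (α₂₁ : ℂ → ℝ → Matrix n m ℂ),
      UniformlyAnalyticOn α₁₂ V (Ioc 0 h₁) M ∧ UniformlyAnalyticOn α₂₁ V (Ioc 0 h₁) M ∧
      UniformlyAnalyticOn (fun z h => diagonalCorrection (κ h) (Θ z h) (α₂₁ z h)) V (Ioc 0 h₁) M ∧
      UniformlyAnalyticOn (fun z h => diagonalCorrection (κ h)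
        ((Θ z h).submatrix Sum.swap Sum.swap) (α₁₂ z h)) V (Ioc 0 h₁) M ∧
      ∀ h ∈ Ioc 0 h₁, ∀ z ∈ V,
        (h : ℂ) • deriv (fun w => α₁₂ w h) z
          = blockRiccati (κ h) (A z h) (B z h) (Θ z h) (α₁₂ z h) ∧
        (h : ℂ) • deriv (fun w => α₂₁ w h) z
          = blockRiccati (κ h) (B z h) (A z h) ((Θ z h).submatrix Sum.swap Sum.swap) (α₂₁ z h) := by
  have hΦ := hΘ.clm_apply (submatrixCLM Sum.swap Sum.swap)
  obtain ⟨ρ, hρ, hρU, h₁, hh₁, M₁₂, α₁₂, hα₁₂, hα₁₂_eq⟩ :=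
    exists_uniformlyAnalyticOn_blockRiccati hU hh₀ hκ hκ0 hA hB hΘ hδ hsep
  obtain ⟨ρ', hρ', -, h₁', hh₁', M₂₁, α₂₁, hα₂₁, hα₂₁_eq⟩ :=
    exists_uniformlyAnalyticOn_blockRiccati hU hh₀ hκ hκ0 hB hA hΦ hδ
      fun h hh μ₂ hμ₂ μ₁ hμ₁ => norm_sub_rev μ₁ μ₂ ▸ hsep h hh μ₁ hμ₁ μ₂ hμ₂
  have hV : ball c (min ρ ρ') ⊆ ball c ρ := ball_subset_ball (min_le_left ρ ρ')
  have hV' : ball c (min ρ ρ') ⊆ ball c ρ' := ball_subset_ball (min_le_right ρ ρ')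
  obtain ⟨M₁₁, hβ₁₁⟩ := (hΘ.mono (hV.trans hρU) (Ioc_subset_Ioc_right hh₁'.2)
    le_rfl).eventually_diagonalCorrection (hα₂₁.mono hV' subset_rfl le_rfl) hh₁'.1
    (hκ.mono (Ioc_subset_Ioc_right hh₁'.2)) hκ0
  obtain ⟨M₂₂, hβ₂₂⟩ := (hΦ.mono (hV.trans hρU) (Ioc_subset_Ioc_right hh₁.2)
    le_rfl).eventually_diagonalCorrection (hα₁₂.mono hV subset_rfl le_rfl) hh₁.1
    (hκ.mono (Ioc_subset_Ioc_right hh₁.2)) hκ0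
  obtain ⟨h₂, ⟨hβ₁₁, hβ₂₂⟩, hh₂, hh₂'⟩ := ((hβ₁₁.and hβ₂₂).and
    (inter_mem (Ioc_mem_nhdsGT hh₁.1) (Ioc_mem_nhdsGT hh₁'.1))).exists
  have hsub : Ioc 0 h₂ ⊆ Ioc 0 h₁ := Ioc_subset_Ioc_right hh₂.2
  have hsub' : Ioc 0 h₂ ⊆ Ioc 0 h₁' := Ioc_subset_Ioc_right hh₂'.2
  refine ⟨ball c (min ρ ρ'), isOpen_ball, mem_ball_self (lt_min hρ hρ'), hV.trans hρU, h₂,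
    ⟨hh₂.1, hh₂.2.trans hh₁.2⟩, M₁₂ ⊔ M₂₁ ⊔ (M₁₁ ⊔ M₂₂), α₁₂, α₂₁, hα₁₂.mono hV hsub ?_,
    hα₂₁.mono hV' hsub' ?_, hβ₁₁.mono subset_rfl subset_rfl ?_, hβ₂₂.mono subset_rfl subset_rfl ?_,
    fun h hh z hz => ⟨hα₁₂_eq h (hsub hh) z (hV hz), hα₂₁_eq h (hsub' hh) z (hV' hz)⟩⟩ <;>
  simp only [le_sup_iff, le_rfl, true_or, or_true]

end BlockDiagonalization

open Filter Metric Topology in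
theorem exact_local_block_diagonalization_general {m n : Type*} [Fintype m] [Fintype n]
    [DecidableEq m] [DecidableEq n] {h₀ : ℝ} (hh₀ : 0 < h₀) {κ : ℝ → ℂ}
    (hκ : ContinuousOn κ (Ioc 0 h₀)) (hκ0 : Tendsto κ (𝓝[>] 0) (𝓝 0)) {c : ℂ} {U : Set ℂ}
    (hU : U ∈ 𝓝 c) {A₁ : ℂ → ℝ → Matrix m m ℂ} {A₂ : ℂ → ℝ → Matrix n n ℂ}
    {Θ : ℂ → ℝ → Matrix (m ⊕ n) (m ⊕ n) ℂ}
    (hanal : ∀ h ∈ Ioc 0 h₀, DifferentiableOn ℂ (fun z => A₁ z h) U ∧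
      DifferentiableOn ℂ (fun z => A₂ z h) U ∧ DifferentiableOn ℂ (fun z => Θ z h) U)
    (hbd : ∃ C : ℝ, ∀ z ∈ U, ∀ h ∈ Ioc 0 h₀, ‖A₁ z h‖ ≤ C ∧ ‖A₂ z h‖ ≤ C ∧ ‖Θ z h‖ ≤ C)
    (hcont : ∀ z ∈ U, ContinuousOn (fun h => (A₁ z h, A₂ z h, Θ z h)) (Ioc 0 h₀))
    (hsep : ∃ δ : ℝ, 0 < δ ∧ ∀ h ∈ Ioc 0 h₀,
      ∀ μ₁ ∈ spectrum ℂ (A₁ c h), ∀ μ₂ ∈ spectrum ℂ (A₂ c h), δ ≤ ‖μ₁ - μ₂‖) :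
    ∃ V : Set ℂ, IsOpen V ∧ c ∈ V ∧ V ⊆ U ∧ ∃ h₁ ∈ Ioc 0 h₀,
    ∃ (α₁₂ : ℂ → ℝ → Matrix m n ℂ) (α₂₁ : ℂ → ℝ → Matrix n m ℂ)
      (β₁₁ : ℂ → ℝ → Matrix m m ℂ) (β₂₂ : ℂ → ℝ → Matrix n n ℂ),
      (∀ h ∈ Ioc 0 h₁, DifferentiableOn ℂ (fun z => α₁₂ z h) V ∧
        DifferentiableOn ℂ (fun z => α₂₁ z h) V ∧
        DifferentiableOn ℂ (fun z => β₁₁ z h) V ∧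
        DifferentiableOn ℂ (fun z => β₂₂ z h) V) ∧
      (∀ z ∈ V, ContinuousOn (fun h => (α₁₂ z h, α₂₁ z h, β₁₁ z h, β₂₂ z h)) (Ioc 0 h₁)) ∧
      (∃ C : ℝ, ∀ z ∈ V, ∀ h ∈ Ioc 0 h₁,
        ‖α₁₂ z h‖ ≤ C ∧ ‖α₂₁ z h‖ ≤ C ∧ ‖β₁₁ z h‖ ≤ C ∧ ‖β₂₂ z h‖ ≤ C) ∧
      (∀ h ∈ Ioc 0 h₁, ∀ z ∈ V,
        (h : ℂ) • deriv (fun w => Matrix.fromBlocks 1 (κ h • α₁₂ w h) (κ h • α₂₁ w h) 1) z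
          = (Matrix.fromBlocks (A₁ z h) 0 0 (A₂ z h) + κ h • Θ z h)
              * Matrix.fromBlocks 1 (κ h • α₁₂ z h) (κ h • α₂₁ z h) 1
            - Matrix.fromBlocks 1 (κ h • α₁₂ z h) (κ h • α₂₁ z h) 1
              * Matrix.fromBlocks (A₁ z h + κ h • β₁₁ z h) 0 0 (A₂ z h + κ h • β₂₂ z h)) := by
  obtain ⟨C, hC⟩ := hbd
  obtain ⟨δ, hδ, hδ_le⟩ := hsep
  have hA₁ : UniformlyAnalyticOn A₁ U (Ioc 0 h₀) C :=
    ⟨fun h hh => (hanal h hh).1, fun z hz => (hcont z hz).fst, fun h hh z hz => (hC z hz h hh).1⟩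
  have hA₂ : UniformlyAnalyticOn A₂ U (Ioc 0 h₀) C :=
    ⟨fun h hh => (hanal h hh).2.1, fun z hz => (hcont z hz).snd.fst,
      fun h hh z hz => (hC z hz h hh).2.1⟩
  have hΘ : UniformlyAnalyticOn Θ U (Ioc 0 h₀) C :=
    ⟨fun h hh => (hanal h hh).2.2, fun z hz => (hcont z hz).snd.snd,
      fun h hh z hz => (hC z hz h hh).2.2⟩
  obtain ⟨V, hV, hcV, hVU, h₁, hh₁, M, α₁₂, α₂₁, hα₁₂, hα₂₁, hβ₁₁, hβ₂₂, hriccati⟩ :=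
    exists_uniformlyAnalyticOn_blockRiccati_pair hU hh₀ hκ hκ0 hA₁ hA₂ hΘ hδ hδ_le
  refine ⟨V, hV, hcV, hVU, h₁, hh₁, α₁₂, α₂₁, _, _,
    fun h hh => ⟨hα₁₂.differentiableOn h hh, hα₂₁.differentiableOn h hh,
      hβ₁₁.differentiableOn h hh, hβ₂₂.differentiableOn h hh⟩,
    fun z hz => (hα₁₂.continuousOn z hz).prodMk ((hα₂₁.continuousOn z hz).prodMk
      ((hβ₁₁.continuousOn z hz).prodMk (hβ₂₂.continuousOn z hz))),
    ⟨M, fun z hz h hh => ⟨hα₁₂.norm_le h hh z hz, hα₂₁.norm_le h hh z hz, hβ₁₁.norm_le h hh z hz,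
      hβ₂₂.norm_le h hh z hz⟩⟩, fun h hh z hz => ?_⟩
  have hVz : V ∈ 𝓝 z := hV.mem_nhds hz
  exact smul_deriv_fromBlocks_of_blockRiccati ((hα₁₂.differentiableOn h hh).differentiableAt hVz)
    ((hα₂₁.differentiableOn h hh).differentiableAt hVz) (hriccati h hh z hz).1
    (hriccati h hh z hz).2

/-- **Exact local block-diagonalization at a finite point** (Theorem 1.4 / Wasow).
Consider `h W' = blockdiag(A₁₁,A₂₂) W + h^p Θ W`, `p ≥ 1`, with `A₁₁, A₂₂, Θ` uniformly
analytic in `x` on a complex neighborhood `U` of `x_* ∈ ℝ` and continuous in `h` on `(0,h₀]`,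
and with `A₁₁(x_*,h)`, `A₂₂(x_*,h)` having no eigenvalues in common, uniformly in `h`.
Then there is a coordinate change `W = T(x,h) Z`, `T = [[I, h^p α₁₂],[h^p α₂₁, I]]`, with
`h Z' = blockdiag(A₁₁ + h^p β₁₁, A₂₂ + h^p β₂₂) Z`; the `α`'s and `β`'s are uniformly
analytic in `x` on a smaller complex neighborhood `V` of `x_*`, continuous in `h` near
`h = 0`, and uniformly bounded as `h → 0⁺`.  The conversion is expressed by the coefficient
identity `h T' = 𝒜 T − T D` on `V`, where `𝒜 = blockdiag(A₁₁,A₂₂) + h^p Θ` and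
`D = blockdiag(A₁₁ + h^p β₁₁, A₂₂ + h^p β₂₂)`. -/
theorem exact_local_block_diagonalization
    (n₁ n₂ : ℕ) (p : ℕ) (hp : 1 ≤ p) (h₀ : ℝ) (hh₀ : 0 < h₀)
    (xstar : ℝ) (U : Set ℂ) (hU : IsOpen U) (hxU : (xstar : ℂ) ∈ U)
    (A₁ : ℂ → ℝ → Matrix (Fin n₁) (Fin n₁) ℂ) (A₂ : ℂ → ℝ → Matrix (Fin n₂) (Fin n₂) ℂ)
    (Θ : ℂ → ℝ → Matrix (Fin n₁ ⊕ Fin n₂) (Fin n₁ ⊕ Fin n₂) ℂ)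
    -- analyticity in x, uniformly in h
    (hanal : ∀ h ∈ Ioc (0:ℝ) h₀, DifferentiableOn ℂ (fun z => A₁ z h) U ∧
      DifferentiableOn ℂ (fun z => A₂ z h) U ∧ DifferentiableOn ℂ (fun z => Θ z h) U)
    (hbd : ∃ C : ℝ, ∀ z ∈ U, ∀ h ∈ Ioc (0:ℝ) h₀, ‖A₁ z h‖ ≤ C ∧ ‖A₂ z h‖ ≤ C ∧ ‖Θ z h‖ ≤ C)
    -- continuity in h
    (hcont : ∀ z ∈ U, ContinuousOn (fun h => (A₁ z h, A₂ z h, Θ z h)) (Ioc 0 h₀))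
    -- no eigenvalues in common, uniformly in h
    (hsep : ∃ δ : ℝ, 0 < δ ∧ ∀ h ∈ Ioc (0:ℝ) h₀,
      ∀ μ₁ ∈ spectrum ℂ (A₁ (xstar : ℂ) h), ∀ μ₂ ∈ spectrum ℂ (A₂ (xstar : ℂ) h),
        δ ≤ ‖μ₁ - μ₂‖) :
    ∃ (V : Set ℂ), IsOpen V ∧ (xstar : ℂ) ∈ V ∧ V ⊆ U ∧
    ∃ h₁ ∈ Ioc (0:ℝ) h₀,
    ∃ (α₁₂ : ℂ → ℝ → Matrix (Fin n₁) (Fin n₂) ℂ)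
      (α₂₁ : ℂ → ℝ → Matrix (Fin n₂) (Fin n₁) ℂ)
      (β₁₁ : ℂ → ℝ → Matrix (Fin n₁) (Fin n₁) ℂ)
      (β₂₂ : ℂ → ℝ → Matrix (Fin n₂) (Fin n₂) ℂ),
      -- uniform analyticity in x, continuity in h, uniform boundedness
      (∀ h ∈ Ioc (0:ℝ) h₁, DifferentiableOn ℂ (fun z => α₁₂ z h) V ∧
        DifferentiableOn ℂ (fun z => α₂₁ z h) V ∧
        DifferentiableOn ℂ (fun z => β₁₁ z h) V ∧
        DifferentiableOn ℂ (fun z => β₂₂ z h) V) ∧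
      (∀ z ∈ V, ContinuousOn (fun h => (α₁₂ z h, α₂₁ z h, β₁₁ z h, β₂₂ z h)) (Ioc 0 h₁)) ∧
      (∃ C : ℝ, ∀ z ∈ V, ∀ h ∈ Ioc (0:ℝ) h₁,
        ‖α₁₂ z h‖ ≤ C ∧ ‖α₂₁ z h‖ ≤ C ∧ ‖β₁₁ z h‖ ≤ C ∧ ‖β₂₂ z h‖ ≤ C) ∧
      -- the conjugation identity  h T' = 𝒜 T − T D  on V
      (∀ h ∈ Ioc (0:ℝ) h₁, ∀ z ∈ V,
        (h : ℂ) • deriv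
            (fun w => Matrix.fromBlocks 1 ((h : ℂ) ^ p • α₁₂ w h)
              ((h : ℂ) ^ p • α₂₁ w h) 1) z
          = (Matrix.fromBlocks (A₁ z h) 0 0 (A₂ z h) + (h : ℂ) ^ p • Θ z h)
              * Matrix.fromBlocks 1 ((h : ℂ) ^ p • α₁₂ z h) ((h : ℂ) ^ p • α₂₁ z h) 1
            - (Matrix.fromBlocks 1 ((h : ℂ) ^ p • α₁₂ z h) ((h : ℂ) ^ p • α₂₁ z h) 1)
              * Matrix.fromBlocks (A₁ z h + (h : ℂ) ^ p • β₁₁ z h) 0 0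
                  (A₂ z h + (h : ℂ) ^ p • β₂₂ z h)) := by
  have hκ : Continuous fun h : ℝ => (h : ℂ) ^ p := by fun_prop
  exact exact_local_block_diagonalization_general hh₀ hκ.continuousOn
    (hκ.tendsto' 0 0 (by simpa using Nat.ne_of_gt hp) |>.mono_left nhdsWithin_le_nhds)
    (hU.mem_nhds hxU) hanal hbd hcont hsep
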